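/- arXiv:2603.19614 — 5 statements merged into one kernel-verified Lean document; each statement's English description precedes it below -/
import Mathlib

section
/- Let n ≥ 3, α ≥ 0 and μ > 0, or n = 2, α > 0 and 0 < μ ≤ μ*(2,α). Then γ(n, μ, α, 2/(n−1)) > 0, and consequently p_S(n+μ,α) > 2/(n−1); equivalently, (n−1)/2 > 1/p_S(n+μ,α). In particular, for n = 2 the condition 0 < μ ≤ μ*(2,α) with α > 0 implies μ < 2+2α. -/
/-!
With `m = n - 1`, the quantity `m² γ(n,μ,α,2/m)` equals `4m² + 4mα + 2μ(m - 2)`. For `m ≥ 2` every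
term is nonnegative and the first is positive. For `n = 2` this quantity is `2(2 + 2α - μ)`, and
`μ*(2,α) = (8 + 3α)/(4 + α) < 2 + 2α` when `α > 0`. Since `γ` is a quadratic in `p` with
negative leading coefficient, every `p` where it is positive lies below its larger root `p_S`
(`lt_pS_of_gam_pos`).
-/

noncomputable section

/-- `γ(n,μ,α,p) = 2+(n+μ+1+2α)p−(n+μ−1)p²`. -/
def gam (n μ α p : ℝ) : ℝ := 2 + (n + μ + 1 + 2 * α) * p - (n + μ - 1) * p ^ 2

/-- `p_S(d,α)`: the positive root of `2+(d+1+2α)p−(d−1)p² = 0` (here `d = n+μ`). -/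
def pS (d α : ℝ) : ℝ :=
  ((d + 1 + 2 * α) + Real.sqrt ((d + 1 + 2 * α) ^ 2 + 8 * (d - 1))) / (2 * (d - 1))

/-- `μ*(n,α)`. -/
def muStar (n α : ℝ) : ℝ :=
  (2 * n ^ 2 + (n + 2 + α) * (n * α + 2 + α)) / ((n + 2 + α) * (2 + α))

theorem lt_pS_of_gam_pos {n μ α x : ℝ} (hd : 1 < n + μ) (hx : 0 < gam n μ α x) :
    x < pS (n + μ) α := by
  unfold gam at hx
  unfold pS
  have ha : 0 < n + μ - 1 := by linarith
  rw [lt_div_iff₀ (by linarith)]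
  -- Complete the square: `γ(x) > 0` says `(2ax - b)² < b² + 8a` with `a = n+μ-1`, `b = n+μ+1+2α`.
  have h : 2 * (n + μ - 1) * x - (n + μ + 1 + 2 * α) <
      Real.sqrt ((n + μ + 1 + 2 * α) ^ 2 + 8 * (n + μ - 1)) := by
    apply Real.lt_sqrt_of_sq_lt
    nlinarith [mul_pos ha hx]
  linarith

/-- At `n = 2` the numerator of `μ*` factors as `(8 + 3α)(2 + α)`. -/
theorem muStar_two {α : ℝ} (hα : 0 < α) : muStar 2 α = (8 + 3 * α) / (4 + α) := by
  unfold muStar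
  have h1 : (2 : ℝ) + 2 + α ≠ 0 := by positivity
  have h2 : 2 + α ≠ 0 := by positivity
  have h3 : 4 + α ≠ 0 := by positivity
  rw [div_eq_div_iff (mul_ne_zero h1 h2) h3]
  ring

theorem muStar_two_lt {α : ℝ} (hα : 0 < α) : muStar 2 α < 2 + 2 * α := by
  rw [muStar_two hα, div_lt_iff₀ (by positivity)]
  nlinarith [mul_pos hα hα]

theorem gam_two_div {n μ α : ℝ} (hn : 1 < n) :
    gam n μ α (2 / (n - 1)) =
      (4 * (n - 1) ^ 2 + 4 * (n - 1) * α + 2 * μ * (n - 3)) / (n - 1) ^ 2 := by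
  have h : n - 1 ≠ 0 := by linarith
  unfold gam
  field_simp
  ring

/-- if `n ≥ 3`, `α ≥ 0`, `μ > 0`, or `n = 2`, `α > 0`, `0 < μ ≤ μ*(2,α)`,
then `γ(n,μ,α,2/(n−1)) > 0`, hence `p_S(n+μ,α) > 2/(n−1)`, i.e. `(n−1)/2 > 1/p_S(n+μ,α)`;
in particular for `n = 2` the hypotheses imply `μ < 2+2α`. -/
theorem gamma_pos_at_two_over_n_sub_one (n : ℕ) (α μ : ℝ)
    (h : (3 ≤ n ∧ 0 ≤ α ∧ 0 < μ) ∨ (n = 2 ∧ 0 < α ∧ 0 < μ ∧ μ ≤ muStar 2 α)) :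
    0 < gam n μ α (2 / ((n : ℝ) - 1)) ∧
      2 / ((n : ℝ) - 1) < pS ((n : ℝ) + μ) α ∧
      1 / pS ((n : ℝ) + μ) α < ((n : ℝ) - 1) / 2 ∧
      (n = 2 → μ < 2 + 2 * α) := by
  have hμ : 0 < μ := by rcases h with h | h <;> tauto
  have hn2 : 2 ≤ n := by rcases h with h | h <;> omega
  have hn : (2 : ℝ) ≤ n := by exact_mod_cast hn2
  have hm : (0 : ℝ) < (n : ℝ) - 1 := by linarith
  have hg : 0 < gam n μ α (2 / ((n : ℝ) - 1)) := by
    rw [gam_two_div (by linarith)]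
    apply div_pos _ (by positivity)
    rcases h with ⟨h3, hα, -⟩ | ⟨rfl, hα, -, hle⟩
    · have h3' : (0 : ℝ) ≤ (n : ℝ) - 3 := sub_nonneg.2 (by exact_mod_cast h3)
      positivity
    · have := muStar_two_lt hα
      norm_num
      linarith
  have hlt := lt_pS_of_gam_pos (by linarith) hg
  refine ⟨hg, hlt, ?_, ?_⟩
  · have := one_div_lt_one_div_of_lt (by positivity) hlt
    rwa [one_div_div] at this
  · intro hn'
    rcases h with ⟨h3, -⟩ | ⟨-, hα, -, hle⟩
    · omega
    · exact hle.trans_lt (muStar_two_lt hα)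
end
end

section
/- Let n ≥ 2 and define φ(x) := ∫_{S^{n−1}} e^{x·ω} dσ(ω) for x ∈ ℝⁿ. Then there exists a constant C = C(n) > 0 such that 0 < φ(x) ≤ C (1+|x|)^{−(n−1)/2} e^{|x|} for all x ∈ ℝⁿ. -/
/-!
The bound follows from comparing a Gaussian integral with a thin spherical shell. Put `R = |x|` and
`T = 1 + R`. Completing the square gives
`∫ e^{x·y - T|y|²/2} dy = (2π/T)^{n/2} e^{R²/(2T)} ≤ (2π/T)^{n/2} e^{R/2}` (`integral_exp_gauss`).
On the other hand, for `y = rω` with `|ω| = 1` and `1 - δ ≤ r < 1`, where `δ = 1/(2√T)`,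
`x·y - T r²/2 ≥ x·ω - (1 - r)R - T r²/2 ≥ x·ω - R/2 - 1` (`exponent_lower_bound`), so that by
integration in polar coordinates (`integral_polar_mul`) the Gaussian integral is at least
`e^{-R/2-1} φ(x) ∫_{1-δ}^1 r^{n-1} dr`. The last integral is at least `δ/n` (`shell_measure`), and
`φ(x) ≤ 2 n e (2π)^{n/2} T^{-(n-1)/2} e^R` results.
-/


noncomputable section

open MeasureTheory
open scoped RealInnerProductSpace

/-- The surface measure `σ` on the unit sphere `S^{n-1} ⊂ ℝⁿ`. -/
def sphMeasure (n : ℕ) : Measure (Metric.sphere (0 : EuclideanSpace ℝ (Fin n)) 1) :=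
  (volume : Measure (EuclideanSpace ℝ (Fin n))).toSphere

/-- `φ(x) = ∫_{S^{n-1}} e^{x·ω} dσ(ω)`. -/
def phi (n : ℕ) (x : EuclideanSpace ℝ (Fin n)) : ℝ :=
  ∫ ω, Real.exp ⟪x, (ω : EuclideanSpace ℝ (Fin n))⟫ ∂(sphMeasure n)

theorem integral_exp_gauss {n : ℕ} (x : EuclideanSpace ℝ (Fin n)) {T : ℝ} (hT : 0 < T) :
    ∫ y : EuclideanSpace ℝ (Fin n), Real.exp (⟪x, y⟫ - T / 2 * ‖y‖ ^ 2) =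
      (Real.pi / (T / 2)) ^ ((n : ℝ) / 2) * Real.exp (‖x‖ ^ 2 / (2 * T)) := by
  have h (y : EuclideanSpace ℝ (Fin n)) : Real.exp (⟪x, y⟫ - T / 2 * ‖y‖ ^ 2) =
      Real.exp (-(T / 2) * ‖y - (1 / T) • x‖ ^ 2) * Real.exp (‖x‖ ^ 2 / (2 * T)) := by
    rw [← Real.exp_add, norm_sub_sq_real, inner_smul_right, norm_smul, real_inner_comm,
      Real.norm_eq_abs, mul_pow, sq_abs]
    congr 1
    field_simp
    ring
  simp_rw [h]
  rw [integral_mul_const,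
    integral_sub_right_eq_self (fun y : EuclideanSpace ℝ (Fin n) =>
      Real.exp (-(T / 2) * ‖y‖ ^ 2)),
    GaussianFourier.integral_rexp_neg_mul_sq_norm (half_pos hT)]
  simp

theorem integrable_exp_gauss {n : ℕ} (x : EuclideanSpace ℝ (Fin n)) {T : ℝ} (hT : 0 < T) :
    Integrable fun y : EuclideanSpace ℝ (Fin n) => Real.exp (⟪x, y⟫ - T / 2 * ‖y‖ ^ 2) := by
  -- A non-integrable function would have integral `0`, but the Gaussian integral is positive.
  by_contra h
  have h1 := integral_exp_gauss x hT
  rw [integral_undef h] at h1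
  have : 0 < (Real.pi / (T / 2)) ^ ((n : ℝ) / 2) * Real.exp (‖x‖ ^ 2 / (2 * T)) := by positivity
  exact this.ne h1

theorem integral_polar_mul {n : ℕ} (f : Metric.sphere (0 : EuclideanSpace ℝ (Fin n)) 1 → ℝ)
    (g : Set.Ioi (0 : ℝ) → ℝ) :
    ∫ y : ({0}ᶜ : Set (EuclideanSpace ℝ (Fin n))),
        f (homeomorphUnitSphereProd _ y).1 * g (homeomorphUnitSphereProd _ y).2
          ∂((volume : Measure (EuclideanSpace ℝ (Fin n))).comap (↑)) =
      (∫ ω, f ω ∂(sphMeasure n)) * ∫ r, g r ∂(Measure.volumeIoiPow (n - 1)) := by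
  have h := (volume : Measure (EuclideanSpace ℝ (Fin n))).measurePreserving_homeomorphUnitSphereProd
  have h2 := h.integral_comp (Homeomorph.measurableEmbedding _) (fun z => f z.1 * g z.2)
  rw [h2, integral_prod_mul, sphMeasure, finrank_euclideanSpace_fin]

/-- The shell `1 - δ ≤ r < 1` has radial measure at least `δ / n`. -/
theorem shell_measure {n : ℕ} (hn : 1 ≤ n) {δ : ℝ} (h0 : 0 < δ) (h1 : 0 < 1 - δ) :
    δ / n ≤ (Measure.volumeIoiPow (n - 1)).real
      (Set.Ico (⟨1 - δ, Set.mem_Ioi.2 h1⟩ : Set.Ioi (0 : ℝ)) ⟨1, Set.mem_Ioi.2 one_pos⟩) := by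
  obtain ⟨m, rfl⟩ : ∃ m, n = m + 1 := ⟨n - 1, by omega⟩
  have hle : (⟨1 - δ, Set.mem_Ioi.2 h1⟩ : Set.Ioi (0 : ℝ)) ≤ ⟨1, Set.mem_Ioi.2 one_pos⟩ :=
    Subtype.mk_le_mk.2 (by linarith)
  have hset : Set.Ico (⟨1 - δ, Set.mem_Ioi.2 h1⟩ : Set.Ioi (0 : ℝ)) ⟨1, Set.mem_Ioi.2 one_pos⟩ =
      Set.Iio ⟨1, Set.mem_Ioi.2 one_pos⟩ \ Set.Iio ⟨1 - δ, Set.mem_Ioi.2 h1⟩ := by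
    ext r
    simp [and_comm]
  have hpow : (1 - δ) ^ (m + 1) ≤ 1 - δ := by
    simpa using pow_le_pow_of_le_one h1.le (by linarith) (Nat.le_add_left 1 m)
  have hfin : Measure.volumeIoiPow m (Set.Iio (⟨1, Set.mem_Ioi.2 one_pos⟩ : Set.Ioi (0 : ℝ)))
      ≠ ⊤ := by
    rw [Measure.volumeIoiPow_apply_Iio]
    exact ENNReal.ofReal_ne_top
  rw [hset, Nat.add_sub_cancel,
    measureReal_sdiff (Set.Iio_subset_Iio hle) measurableSet_Iio hfin]
  simp only [measureReal_def, Measure.volumeIoiPow_apply_Iio]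
  rw [ENNReal.toReal_ofReal (by positivity), ENNReal.toReal_ofReal (by positivity), ← sub_div]
  push_cast
  gcongr
  simp only [one_pow]
  linarith

/-- Here `s` stands for `x·ω` and `R` for `|x|`. The bound rests on
`-(1 - r)R - R r²/2 = -R/2 - R(1 - r)²/2`. -/
theorem exponent_lower_bound {R r δ s : ℝ} (hR : 0 ≤ R) (hs : s ≤ R)
    (hδ : (1 + R) * δ ^ 2 ≤ 1) (hr0 : 0 ≤ r) (hr : 1 - δ ≤ r) (hr1 : r ≤ 1) :
    -(R / 2) - 1 + s ≤ r * s - (1 + R) / 2 * r ^ 2 := by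
  have h1 : (1 - r) * s ≤ (1 - r) * R := mul_le_mul_of_nonneg_left hs (by linarith)
  have h2 : (1 - r) ^ 2 ≤ δ ^ 2 := pow_le_pow_left₀ (by linarith) (by linarith) 2
  have h3 : R * (1 - r) ^ 2 ≤ R * δ ^ 2 := mul_le_mul_of_nonneg_left h2 hR
  have h4 : r ^ 2 ≤ 1 := pow_le_one₀ hr0 hr1
  nlinarith [sq_nonneg δ]

theorem phi_integrable (n : ℕ) (x : EuclideanSpace ℝ (Fin n)) :
    Integrable (fun ω : Metric.sphere (0 : EuclideanSpace ℝ (Fin n)) 1 =>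
      Real.exp ⟪x, (ω : EuclideanSpace ℝ (Fin n))⟫) (sphMeasure n) := by
  unfold sphMeasure
  refine Continuous.integrable_of_hasCompactSupport (by fun_prop) ?_
  exact HasCompactSupport.of_compactSpace _

theorem phi_pos {n : ℕ} (hn : 1 ≤ n) (x : EuclideanSpace ℝ (Fin n)) : 0 < phi n x := by
  have : Nonempty (Fin n) := ⟨⟨0, hn⟩⟩
  have : NeZero (sphMeasure n) := ⟨Measure.toSphere_ne_zero _⟩
  exact integral_exp_pos (phi_integrable n x)

/-- The left side bounds from below the mass of the Gaussian `e^{x·y - (1+|x|)|y|²/2}` on the shell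
`1 - δ ≤ |y| < 1`; the right side bounds its total mass from above. -/
theorem phi_mul_le {n : ℕ} (hn : 1 ≤ n) (x : EuclideanSpace ℝ (Fin n)) {δ : ℝ} (h0 : 0 < δ)
    (h1 : 0 < 1 - δ) (hδ : (1 + ‖x‖) * δ ^ 2 ≤ 1) :
    phi n x * (δ / n) * Real.exp (-(‖x‖ / 2) - 1) ≤
      (Real.pi / ((1 + ‖x‖) / 2)) ^ ((n : ℝ) / 2) * Real.exp (‖x‖ / 2) := by
  have : Nonempty (Fin n) := ⟨⟨0, hn⟩⟩
  have hT : 0 < 1 + ‖x‖ := by positivity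
  set A := Set.Ico (⟨1 - δ, Set.mem_Ioi.2 h1⟩ : Set.Ioi (0 : ℝ)) ⟨1, Set.mem_Ioi.2 one_pos⟩ with hA
  have hpolar := integral_polar_mul (n := n)
    (fun ω => Real.exp (-(‖x‖ / 2) - 1) * Real.exp ⟪x, (ω : EuclideanSpace ℝ (Fin n))⟫)
    (A.indicator 1)
  rw [integral_const_mul, integral_indicator_one measurableSet_Ico] at hpolar
  have hint : Integrable (fun y : ({0}ᶜ : Set (EuclideanSpace ℝ (Fin n))) =>
      Real.exp (⟪x, (y : EuclideanSpace ℝ (Fin n))⟫ -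
        (1 + ‖x‖) / 2 * ‖(y : EuclideanSpace ℝ (Fin n))‖ ^ 2))
      ((volume : Measure (EuclideanSpace ℝ (Fin n))).comap (↑)) :=
    (integrableOn_iff_comap_subtypeVal (measurableSet_singleton _).compl).1
      (integrable_exp_gauss x hT).integrableOn
  have hmono := integral_mono_of_nonneg
    (f := fun y : ({0}ᶜ : Set (EuclideanSpace ℝ (Fin n))) =>
      Real.exp (-(‖x‖ / 2) - 1) *
        Real.exp ⟪x, ((homeomorphUnitSphereProd _ y).1 : EuclideanSpace ℝ (Fin n))⟫ *
        A.indicator 1 (homeomorphUnitSphereProd _ y).2)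
    (Filter.Eventually.of_forall fun y => by
      have : 0 ≤ A.indicator (1 : Set.Ioi (0 : ℝ) → ℝ) (homeomorphUnitSphereProd _ y).2 :=
        Set.indicator_nonneg (fun _ _ => zero_le_one) _
      show (0 : ℝ) ≤ _
      positivity) hint
    (Filter.Eventually.of_forall fun y => by
      dsimp only
      by_cases hy : (homeomorphUnitSphereProd _ y).2 ∈ A
      · have hr : 1 - δ ≤ ‖(y : EuclideanSpace ℝ (Fin n))‖ := by
          simpa using Subtype.coe_le_coe.2 hy.1
        have hr1 : ‖(y : EuclideanSpace ℝ (Fin n))‖ < 1 := by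
          simpa using Subtype.coe_lt_coe.2 hy.2
        have hω : ‖((homeomorphUnitSphereProd _ y).1 : EuclideanSpace ℝ (Fin n))‖ = 1 :=
          norm_eq_of_mem_sphere _
        have hs : ⟪x, ((homeomorphUnitSphereProd _ y).1 : EuclideanSpace ℝ (Fin n))⟫ ≤ ‖x‖ := by
          have h := real_inner_le_norm x
            ((homeomorphUnitSphereProd _ y).1 : EuclideanSpace ℝ (Fin n))
          rwa [hω, mul_one] at h
        have hxy : ⟪x, (y : EuclideanSpace ℝ (Fin n))⟫ = ‖(y : EuclideanSpace ℝ (Fin n))‖ *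
            ⟪x, ((homeomorphUnitSphereProd _ y).1 : EuclideanSpace ℝ (Fin n))⟫ := by
          have hne : ‖(y : EuclideanSpace ℝ (Fin n))‖ ≠ 0 := norm_ne_zero_iff.2 y.2
          rw [homeomorphUnitSphereProd_apply_fst_coe, inner_smul_right, mul_inv_cancel_left₀ hne]
        rw [Set.indicator_of_mem hy, Pi.one_apply, mul_one, ← Real.exp_add, hxy]
        exact Real.exp_le_exp.2
          (exponent_lower_bound (norm_nonneg x) hs hδ (norm_nonneg _) hr hr1.le)
      · rw [Set.indicator_of_notMem hy, mul_zero]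
        positivity)
  rw [hpolar, integral_subtype_comap (measurableSet_singleton _).compl
      (fun y : EuclideanSpace ℝ (Fin n) => Real.exp (⟪x, y⟫ - (1 + ‖x‖) / 2 * ‖y‖ ^ 2)),
    restrict_compl_singleton, integral_exp_gauss x hT] at hmono
  have hexp : ‖x‖ ^ 2 / (2 * (1 + ‖x‖)) ≤ ‖x‖ / 2 := by
    rw [div_le_div_iff₀ (by positivity) two_pos]
    nlinarith [norm_nonneg x]
  calc phi n x * (δ / n) * Real.exp (-(‖x‖ / 2) - 1)
      ≤ phi n x * (Measure.volumeIoiPow (n - 1)).real A * Real.exp (-(‖x‖ / 2) - 1) := by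
        gcongr
        · exact (phi_pos hn x).le
        · exact shell_measure hn h0 h1
    _ = Real.exp (-(‖x‖ / 2) - 1) * phi n x * (Measure.volumeIoiPow (n - 1)).real A := by ring
    _ ≤ (Real.pi / ((1 + ‖x‖) / 2)) ^ ((n : ℝ) / 2) *
          Real.exp (‖x‖ ^ 2 / (2 * (1 + ‖x‖))) := hmono
    _ ≤ _ := by gcongr

/-- for `n ≥ 2` there is `C = C(n) > 0` with
`0 < φ(x) ≤ C (1+|x|)^{−(n−1)/2} e^{|x|}` for all `x ∈ ℝⁿ`. -/
theorem phi_upper_bound (n : ℕ) (hn : 2 ≤ n) :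
    ∃ C > (0 : ℝ), ∀ x : EuclideanSpace ℝ (Fin n),
      0 < phi n x ∧
        phi n x ≤ C * (1 + ‖x‖) ^ (-(((n : ℝ) - 1) / 2)) * Real.exp ‖x‖ := by
  have hn0 : (0 : ℝ) < n := by exact_mod_cast (by omega : 0 < n)
  refine ⟨2 * n * Real.exp 1 * (2 * Real.pi) ^ ((n : ℝ) / 2), by positivity, fun x => ?_⟩
  refine ⟨phi_pos (by omega) x, ?_⟩
  have hT : 0 < 1 + ‖x‖ := by positivity
  set T := 1 + ‖x‖ with hTdef
  have hq1 : 1 ≤ √T := Real.one_le_sqrt.2 (by linarith [norm_nonneg x])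
  have hq0 : 0 < √T := by linarith
  have hqq : √T ^ 2 = T := Real.sq_sqrt hT.le
  -- With this thickness `T δ² = 1/4`, and `δ ≤ 1/2` keeps the shell away from the origin.
  have hmain := phi_mul_le (δ := 1 / (2 * √T)) (by omega : 1 ≤ n) x (by positivity)
    (by
      rw [sub_pos, div_lt_one (by positivity)]
      linarith)
    (by
      rw [← hTdef, div_pow, mul_pow, hqq]
      field_simp
      norm_num)
  rw [← hTdef] at hmain
  have hG : (Real.pi / (T / 2)) ^ ((n : ℝ) / 2) =
      (2 * Real.pi) ^ ((n : ℝ) / 2) * T ^ (-((n : ℝ) / 2)) := by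
    rw [Real.rpow_neg hT.le, ← div_eq_mul_inv, ← Real.div_rpow (by positivity) hT.le]
    congr 1
    field_simp
  have hpw : √T * T ^ (-((n : ℝ) / 2)) = T ^ (-(((n : ℝ) - 1) / 2)) := by
    rw [Real.sqrt_eq_rpow, ← Real.rpow_add hT]
    congr 1
    ring
  have hexp : Real.exp (‖x‖ / 2) =
      Real.exp ‖x‖ * Real.exp 1 * Real.exp (-(‖x‖ / 2) - 1) := by
    rw [← Real.exp_add, ← Real.exp_add]
    congr 1
    ring
  rw [hG, hexp, ← mul_assoc] at hmain
  have h2 := le_of_mul_le_mul_right hmain (Real.exp_pos _)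
  calc phi n x = phi n x * (1 / (2 * √T) / n) * (2 * √T * n) := by field_simp
    _ ≤ (2 * Real.pi) ^ ((n : ℝ) / 2) * T ^ (-((n : ℝ) / 2)) *
          (Real.exp ‖x‖ * Real.exp 1) * (2 * √T * n) := by gcongr
    _ = 2 * n * Real.exp 1 * (2 * Real.pi) ^ ((n : ℝ) / 2) *
          (√T * T ^ (-((n : ℝ) / 2))) * Real.exp ‖x‖ := by ring
    _ = _ := by rw [hpw]
end
end

section
/- Let μ > 0 and define h(t) := t^{(μ+1)/2} K_{(μ−1)/2}(t) for t > 0. Then h is twice continuously differentiable on (0,∞) and satisfies the ordinary differential equation h''(t) − d/dt( μ h(t)/t ) − h(t) = 0 for all t > 0. -/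
/-!
The argument differentiates the integral for `K_ν` under the integral sign and integrates by parts.
With `J n t = ∫_0^∞ coshⁿ s · e^{−t cosh s} cosh(νs) ds`, the integrand is at most a constant times
`e^{−s}`, the constant being uniform for `t` bounded away from `0` (`besselIntegrand_le`). Hence
`J n` has derivative `−J (n+1)`, so that `K_ν = J 0` is smooth on `(0, ∞)`. The Bessel equation
`t² K'' + t K' − (t² + ν²) K = 0` holds because `t J 1 − t² J 2 + (t² + ν²) J 0` is the integral of
the `s`-derivative of `e^{−t cosh s} (t sinh s cosh νs + ν sinh νs)`, which vanishes at `0` and at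
infinity (`besselMoment_ode`). Finally, for `h = t^{ν+1} K_ν` and `μ = 2ν + 1` one has
`h'' − (μ h / t)' − h = t^{ν−1} (t² K'' + t K' − (t² + ν²) K)`.
-/

noncomputable section

/-- The modified Bessel function of the second kind,
`K_ν(t) = ∫_0^∞ e^{−t cosh s} cosh(νs) ds`. -/
def besselK (ν t : ℝ) : ℝ :=
  ∫ s in Set.Ioi (0 : ℝ), Real.exp (-t * Real.cosh s) * Real.cosh (ν * s)

/-- `h(t) = t^{(μ+1)/2} K_{(μ−1)/2}(t)`. -/
def hEPD (μ t : ℝ) : ℝ := t ^ ((μ + 1) / 2) * besselK ((μ - 1) / 2) t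

open MeasureTheory Set Filter Topology

/-- The integrand `coshⁿ s · e^{−t cosh s} cosh(νs)` of the `n`-th moment. -/
def besselIntegrand (ν : ℝ) (n : ℕ) (t s : ℝ) : ℝ :=
  Real.cosh s ^ n * (Real.exp (-t * Real.cosh s) * Real.cosh (ν * s))

/-- The moment `∫_0^∞ coshⁿ s · e^{−t cosh s} cosh(νs) ds`, equal to `(−1)ⁿ` times the `n`-th
derivative of `K_ν` at `t > 0`. -/
def besselMoment (ν : ℝ) (n : ℕ) (t : ℝ) : ℝ :=
  ∫ s in Ioi (0 : ℝ), besselIntegrand ν n t s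

lemma besselMoment_zero (ν t : ℝ) : besselMoment ν 0 t = besselK ν t := by
  simp [besselMoment, besselIntegrand, besselK]

lemma besselIntegrand_nonneg (ν : ℝ) (n : ℕ) (t s : ℝ) : 0 ≤ besselIntegrand ν n t s := by
  have h1 := Real.cosh_pos s
  have h2 := Real.cosh_pos (ν * s)
  unfold besselIntegrand
  positivity

lemma continuous_besselIntegrand (ν : ℝ) (n : ℕ) (t : ℝ) :
    Continuous (besselIntegrand ν n t) := by
  unfold besselIntegrand
  fun_prop

lemma cosh_le_exp_abs (x : ℝ) : Real.cosh x ≤ Real.exp |x| := by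
  rw [← Real.cosh_abs, Real.cosh_eq]
  have : Real.exp (-|x|) ≤ Real.exp |x| := Real.exp_le_exp.2 (by linarith [abs_nonneg x])
  linarith

/-- An exponentially decaying bound on the integrand, uniform for `t ≥ c`. -/
lemma besselIntegrand_le (ν : ℝ) (n : ℕ) {c t s : ℝ} (hc : 0 < c) (hct : c ≤ t) (hs : 0 ≤ s) :
    besselIntegrand ν n t s ≤ Real.exp ((n + |ν| + 1) ^ 2 / c) * Real.exp (-s) := by
  have h1 : Real.cosh s ≤ Real.exp s := by simpa [abs_of_nonneg hs] using cosh_le_exp_abs s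
  have h2 : Real.cosh (ν * s) ≤ Real.exp (|ν| * s) := by
    simpa [abs_mul, abs_of_nonneg hs] using cosh_le_exp_abs (ν * s)
  have h3 : s ^ 2 / 4 ≤ Real.cosh s := by
    rw [Real.cosh_eq]
    have := Real.quadratic_le_exp_of_nonneg hs
    have := Real.exp_pos (-s)
    linarith
  have h4 : c * (s ^ 2 / 4) ≤ t * Real.cosh s := by
    have ht : 0 ≤ t := hc.le.trans hct
    gcongr
  set A : ℝ := n + |ν| + 1 with hA
  -- Completing the square: `A s − c s² / 4 ≤ A² / c`.
  have h5 : A * s ≤ A ^ 2 / c + c * (s ^ 2 / 4) := by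
    have : A ^ 2 / c + c * (s ^ 2 / 4) - A * s = (A - c * s / 2) ^ 2 / c := by
      field_simp
      ring
    have : 0 ≤ (A - c * s / 2) ^ 2 / c := by positivity
    linarith
  have h0 := (Real.cosh_pos s).le
  have h0' := (Real.cosh_pos (ν * s)).le
  calc besselIntegrand ν n t s
      ≤ Real.exp s ^ n * (Real.exp (-(c * (s ^ 2 / 4))) * Real.exp (|ν| * s)) := by
        unfold besselIntegrand
        gcongr
        linarith
    _ = Real.exp (n * s + (-(c * (s ^ 2 / 4)) + |ν| * s)) := by
        rw [← Real.exp_nat_mul, ← Real.exp_add, ← Real.exp_add]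
    _ ≤ Real.exp (A ^ 2 / c + -s) := by
        apply Real.exp_le_exp.2
        rw [hA] at h5 ⊢
        linarith
    _ = _ := Real.exp_add _ _

lemma integrableOn_bound (C : ℝ) : IntegrableOn (fun s : ℝ => C * Real.exp (-s)) (Ioi 0) :=
  (integrableOn_exp_neg_Ioi 0).const_mul C

lemma integrableOn_besselIntegrand (ν : ℝ) (n : ℕ) {t : ℝ} (ht : 0 < t) :
    IntegrableOn (besselIntegrand ν n t) (Ioi 0) := by
  refine (integrableOn_bound (Real.exp ((n + |ν| + 1) ^ 2 / t))).mono'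
    (continuous_besselIntegrand ν n t).aestronglyMeasurable ?_
  filter_upwards [ae_restrict_mem measurableSet_Ioi] with s hs
  rw [Real.norm_of_nonneg (besselIntegrand_nonneg ..)]
  exact besselIntegrand_le ν n ht le_rfl (le_of_lt hs)

lemma hasDerivAt_besselMoment (ν : ℝ) (n : ℕ) {t : ℝ} (ht : 0 < t) :
    HasDerivAt (besselMoment ν n) (-besselMoment ν (n + 1) t) t := by
  have key := (hasDerivAt_integral_of_dominated_loc_of_deriv_le
    (μ := volume.restrict (Ioi (0 : ℝ))) (F := besselIntegrand ν n)
    (F' := fun t s => -besselIntegrand ν (n + 1) t s) (x₀ := t) (s := Ioi (t / 2))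
    (bound := fun s => Real.exp (((n + 1 : ℕ) + |ν| + 1) ^ 2 / (t / 2)) * Real.exp (-s))
    (Ioi_mem_nhds (by linarith))
    (Eventually.of_forall fun x => (continuous_besselIntegrand ν n x).aestronglyMeasurable)
    (integrableOn_besselIntegrand ν n ht)
    (continuous_besselIntegrand ν (n + 1) t).neg.aestronglyMeasurable ?_
    (integrableOn_bound _) ?_).2
  · rw [integral_neg] at key
    exact key
  · filter_upwards [ae_restrict_mem measurableSet_Ioi] with s hs x hx
    rw [norm_neg, Real.norm_of_nonneg (besselIntegrand_nonneg ..)]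
    exact besselIntegrand_le ν (n + 1) (by linarith) (le_of_lt hx) (le_of_lt hs)
  · refine Eventually.of_forall fun s x _ => ?_
    have h := ((((hasDerivAt_id x).neg.mul_const (Real.cosh s)).exp.mul_const
      (Real.cosh (ν * s))).const_mul (Real.cosh s ^ n))
    refine h.congr_deriv ?_
    simp only [besselIntegrand, id, Pi.neg_apply]
    ring

lemma contDiffOn_besselMoment (ν : ℝ) (k : ℕ) :
    ∀ n : ℕ, ContDiffOn ℝ k (besselMoment ν n) (Ioi 0) := by
  induction k with
  | zero =>
    intro n
    exact contDiffOn_zero.2 fun t ht =>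
      (hasDerivAt_besselMoment ν n ht).continuousAt.continuousWithinAt
  | succ k ih =>
    intro n
    push_cast
    rw [contDiffOn_succ_iff_deriv_of_isOpen isOpen_Ioi]
    refine ⟨fun t ht => (hasDerivAt_besselMoment ν n ht).differentiableAt.differentiableWithinAt,
      by simp, ?_⟩
    exact (ih (n + 1)).neg.congr fun t ht => (hasDerivAt_besselMoment ν n ht).deriv

/-- The modified Bessel equation for `K_ν`, with `K_ν' = −J 1` and `K_ν'' = J 2`. -/
lemma besselMoment_ode (ν : ℝ) {t : ℝ} (ht : 0 < t) :
    t * besselMoment ν 1 t - t ^ 2 * besselMoment ν 2 t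
      + (t ^ 2 + ν ^ 2) * besselMoment ν 0 t = 0 := by
  have i (n : ℕ) := integrableOn_besselIntegrand ν n ht
  set B : ℝ → ℝ := fun s => Real.exp (-t * Real.cosh s) *
    (t * Real.sinh s * Real.cosh (ν * s) + ν * Real.sinh (ν * s)) with hB
  have hderiv : ∀ s ∈ Ici (0 : ℝ), HasDerivAt B
      (t * besselIntegrand ν 1 t s - t ^ 2 * besselIntegrand ν 2 t s
        + (t ^ 2 + ν ^ 2) * besselIntegrand ν 0 t s) s := by
    intro s _
    have hν : HasDerivAt (fun s => ν * s) ν s := by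
      simpa using (hasDerivAt_id s).const_mul ν
    have h := (((Real.hasDerivAt_cosh s).const_mul (-t)).exp).mul
      ((((Real.hasDerivAt_sinh s).const_mul t).mul hν.cosh).add (hν.sinh.const_mul ν))
    refine h.congr_deriv ?_
    have hsq := Real.cosh_sq s
    simp only [besselIntegrand, Pi.mul_apply, Pi.add_apply]
    linear_combination
      (t ^ 2 * Real.exp (-t * Real.cosh s) * Real.cosh (ν * s)) * hsq
  have hint : IntegrableOn (fun s => t * besselIntegrand ν 1 t s - t ^ 2 * besselIntegrand ν 2 t s
        + (t ^ 2 + ν ^ 2) * besselIntegrand ν 0 t s) (Ioi 0) :=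
    (((i 1).const_mul _).sub ((i 2).const_mul _)).add ((i 0).const_mul _)
  have hlim : Tendsto B atTop (𝓝 0) := by
    set C : ℝ := t * Real.exp (((1 : ℕ) + |ν| + 1) ^ 2 / t)
      + |ν| * Real.exp (((0 : ℕ) + |ν| + 1) ^ 2 / t) with hC
    have hg : Tendsto (fun s : ℝ => C * Real.exp (-s)) atTop (𝓝 0) := by
      simpa using (Real.tendsto_exp_neg_atTop_nhds_zero).const_mul C
    refine squeeze_zero_norm' ?_ hg
    filter_upwards [eventually_ge_atTop (0 : ℝ)] with s hs
    have b1 := besselIntegrand_le ν 1 ht le_rfl hs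
    have b0 := besselIntegrand_le ν 0 ht le_rfl hs
    have abs_sinh_le (x : ℝ) : |Real.sinh x| ≤ Real.cosh x := by
      rw [Real.abs_sinh, ← Real.cosh_abs]
      exact (Real.sinh_lt_cosh _).le
    have hc := Real.cosh_pos (ν * s)
    calc ‖B s‖ = Real.exp (-t * Real.cosh s) *
          |t * Real.sinh s * Real.cosh (ν * s) + ν * Real.sinh (ν * s)| := by
          rw [hB, Real.norm_eq_abs, abs_mul, Real.abs_exp]
      _ ≤ Real.exp (-t * Real.cosh s) *
          (t * Real.cosh s * Real.cosh (ν * s) + |ν| * Real.cosh (ν * s)) := by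
          gcongr
          refine (abs_add_le _ _).trans ?_
          rw [abs_mul, abs_mul, abs_mul, abs_of_pos ht, abs_of_pos hc]
          gcongr <;> exact abs_sinh_le _
      _ = t * besselIntegrand ν 1 t s + |ν| * besselIntegrand ν 0 t s := by
          simp only [besselIntegrand]
          ring
      _ ≤ t * (Real.exp (((1 : ℕ) + |ν| + 1) ^ 2 / t) * Real.exp (-s))
          + |ν| * (Real.exp (((0 : ℕ) + |ν| + 1) ^ 2 / t) * Real.exp (-s)) := by
          gcongr
      _ = C * Real.exp (-s) := by
          rw [hC]
          ring
  have h := integral_Ioi_of_hasDerivAt_of_tendsto' hderiv hint hlim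
  have i12 : IntegrableOn
      (fun s => t * besselIntegrand ν 1 t s - t ^ 2 * besselIntegrand ν 2 t s) (Ioi 0) :=
    ((i 1).const_mul _).sub ((i 2).const_mul _)
  rw [integral_add i12 ((i 0).const_mul _),
    integral_sub ((i 1).const_mul _) ((i 2).const_mul _),
    integral_const_mul, integral_const_mul, integral_const_mul] at h
  have hB0 : B 0 = 0 := by simp [hB]
  rw [hB0, sub_zero] at h
  exact h

lemma hEPD_eq (μ : ℝ) :
    hEPD μ = fun t => t ^ ((μ + 1) / 2) * besselMoment ((μ - 1) / 2) 0 t := by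
  funext t
  rw [hEPD, besselMoment_zero]

lemma hasDerivAt_rpow_mul_besselMoment (a ν : ℝ) (n : ℕ) {t : ℝ} (ht : 0 < t) :
    HasDerivAt (fun t => t ^ a * besselMoment ν n t)
      (a * (t ^ (a - 1) * besselMoment ν n t) - t ^ a * besselMoment ν (n + 1) t) t := by
  refine ((Real.hasDerivAt_rpow_const (Or.inl ht.ne')).mul
    (hasDerivAt_besselMoment ν n ht)).congr_deriv ?_
  ring

/-- for `μ > 0`, `h` is `C²` on `(0,∞)` and satisfies
`h''(t) − (μ h(t)/t)' − h(t) = 0` there. -/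
theorem hEPD_solves_ODE (μ : ℝ) (hμ : 0 < μ) :
    ContDiffOn ℝ 2 (hEPD μ) (Set.Ioi 0) ∧
      ∀ t ∈ Set.Ioi (0 : ℝ),
        deriv (deriv (hEPD μ)) t - deriv (fun s => μ * hEPD μ s / s) t - hEPD μ t = 0 := by
  rw [hEPD_eq]
  set ν := (μ - 1) / 2 with hν
  have ha : (μ + 1) / 2 = ν + 1 := by rw [hν]; ring
  have hμν : μ = 2 * ν + 1 := by rw [hν]; ring
  rw [ha]
  constructor
  · refine ContDiffOn.mul (fun t ht => ?_) (by exact_mod_cast contDiffOn_besselMoment ν 2 0)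
    exact (Real.contDiffAt_rpow_const_of_ne (ne_of_gt ht)).contDiffWithinAt
  intro t ht
  have ht : 0 < t := ht
  have d1 (s : ℝ) (hs : 0 < s) := hasDerivAt_rpow_mul_besselMoment (ν + 1) ν 0 hs
  have e1 : deriv (fun t => t ^ (ν + 1) * besselMoment ν 0 t) =ᶠ[𝓝 t] fun s =>
      (ν + 1) * (s ^ (ν + 1 - 1) * besselMoment ν 0 s) - s ^ (ν + 1) * besselMoment ν 1 s := by
    filter_upwards [Ioi_mem_nhds ht] with s hs using (d1 s hs).deriv
  have d2 := ((hasDerivAt_rpow_mul_besselMoment (ν + 1 - 1) ν 0 ht).const_mul (ν + 1)).sub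
    (hasDerivAt_rpow_mul_besselMoment (ν + 1) ν 1 ht)
  have d3 := ((d1 t ht).const_mul μ).div (hasDerivAt_id t) ht.ne'
  have hode := besselMoment_ode ν ht
  have r1 : t ^ (ν + 1) = t ^ (ν - 1) * t ^ 2 := by
    rw [← Real.rpow_natCast t 2, ← Real.rpow_add ht]
    congr 1
    push_cast
    ring
  have r0 : t ^ ν = t ^ (ν - 1) * t := by
    rw [← Real.rpow_add_one ht.ne', sub_add_cancel]
  have D2 := d2.deriv
  have D3 := d3.deriv
  rw [e1.deriv_eq]
  -- `erw` matches the pointwise difference and quotient of functions with their unfolded forms.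
  erw [D2, D3]
  simp only [add_sub_cancel_right, id, zero_add, Nat.reduceAdd, r0, r1, hμν]
  field_simp
  linear_combination (-t ^ (ν - 1)) * hode
end
end

section
/- Let μ > 0 and define h(t) := t^{(μ+1)/2} K_{(μ−1)/2}(t) for t > 0. Then lim_{t→0⁺} ( −h'(t) + μ h(t)/t ) = 2^{(μ−1)/2} Γ((μ+1)/2), and this limit is strictly positive. -/
/-!
Put `ν = (μ - 1) / 2`, so that `h(t) = t ^ (ν + 1) K_ν(t)` and `μ = 2 ν + 1`. Two classical
recurrences, `K_ν' = -(K_{ν+1} + K_{ν-1}) / 2` (differentiation under the integral sign,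
`hasDerivAt_besselK`) and `ν K_ν(t) = t (K_{ν+1}(t) - K_{ν-1}(t)) / 2` (integration by parts,
`mul_besselK`), collapse the expression `-h'(t) + μ h(t) / t` to `t ^ (ν + 1) K_{ν+1}(t)`.

For `a > 0`, folding the integral over `ℝ` and substituting `u = (t / 2) e ^ s` gives
`t ^ a K_a(t) = 2 ^ (a - 1) ∫_0^∞ e ^ (-u) u ^ (a - 1) e ^ (-t² / (4 u)) du`
(`rpow_mul_besselK`). As `t → 0⁺` the last factor increases to `1`, so dominated convergence
with Euler's integrand as the bound yields the limit `2 ^ (a - 1) Γ(a)`; take `a = (μ + 1) / 2`.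
-/

noncomputable section

open MeasureTheory Set Filter Topology

/-- The integrand `e ^ (-u) u ^ (a - 1) e ^ (-t² / (4 u))` of the Gamma-type representation of
`t ^ a K_a(t)`. -/
def gammaKernel (a t u : ℝ) : ℝ :=
  Real.exp (-u) * u ^ (a - 1) * Real.exp (-(t ^ 2 / (4 * u)))

lemma gammaKernel_measurable (a t : ℝ) : Measurable (gammaKernel a t) := by
  unfold gammaKernel
  fun_prop

lemma norm_gammaKernel_le (a t : ℝ) {u : ℝ} (hu : 0 < u) :
    ‖gammaKernel a t u‖ ≤ Real.exp (-u) * u ^ (a - 1) := by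
  have h0 : 0 ≤ Real.exp (-u) * u ^ (a - 1) := by positivity
  have h1 : Real.exp (-(t ^ 2 / (4 * u))) ≤ 1 := by
    apply Real.exp_le_one_iff.2
    have : 0 ≤ t ^ 2 / (4 * u) := by positivity
    linarith
  unfold gammaKernel
  rw [Real.norm_eq_abs, abs_of_nonneg (mul_nonneg h0 (Real.exp_pos _).le)]
  exact mul_le_of_le_one_right h0 h1

lemma gammaKernel_integrableOn {a : ℝ} (ha : 0 < a) (t : ℝ) :
    IntegrableOn (gammaKernel a t) (Ioi 0) := by
  refine Integrable.mono' (Real.GammaIntegral_convergent ha)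
    (gammaKernel_measurable a t).aestronglyMeasurable ?_
  filter_upwards [ae_restrict_mem measurableSet_Ioi] with u hu
  exact norm_gammaKernel_le a t hu

lemma tendsto_integral_gammaKernel {a : ℝ} (ha : 0 < a) :
    Tendsto (fun t => ∫ u in Ioi (0 : ℝ), gammaKernel a t u) (𝓝[>] 0) (𝓝 (Real.Gamma a)) := by
  rw [Real.Gamma_eq_integral ha]
  refine tendsto_integral_filter_of_dominated_convergence _
    (Eventually.of_forall fun t => (gammaKernel_measurable a t).aestronglyMeasurable)
    (Eventually.of_forall fun t => ?_) (Real.GammaIntegral_convergent ha)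
    (Eventually.of_forall fun u => ?_)
  · filter_upwards [ae_restrict_mem measurableSet_Ioi] with u hu
    exact norm_gammaKernel_le a t hu
  · have hc : Continuous fun t => gammaKernel a t u := by
      unfold gammaKernel
      fun_prop
    have := (hc.tendsto 0).mono_left (nhdsWithin_le_nhds (s := Ioi (0 : ℝ)))
    simpa [gammaKernel] using this

lemma image_half_mul_exp {t : ℝ} (ht : 0 < t) :
    (fun s : ℝ => t / 2 * Real.exp s) '' univ = Ioi 0 := by
  ext u
  simp only [image_univ, mem_range, mem_Ioi]
  constructor
  · rintro ⟨s, rfl⟩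
    positivity
  · intro hu
    refine ⟨Real.log (u / (t / 2)), ?_⟩
    rw [Real.exp_log (by positivity)]
    field_simp

lemma gammaKernel_comp (a : ℝ) {t : ℝ} (ht : 0 < t) (s : ℝ) :
    |t / 2 * Real.exp s| • gammaKernel a t (t / 2 * Real.exp s) =
      (t / 2) ^ a * (Real.exp (-t * Real.cosh s) * Real.exp (a * s)) := by
  have hp : 0 < t / 2 * Real.exp s := by positivity
  have h1 : (t / 2 * Real.exp s) * (t / 2 * Real.exp s) ^ (a - 1) =
      (t / 2) ^ a * Real.exp (a * s) := by
    rw [Real.rpow_sub_one hp.ne', mul_div_cancel₀ _ hp.ne',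
      Real.mul_rpow (by positivity) (Real.exp_pos s).le, ← Real.exp_mul, mul_comm s a]
  have h2 : Real.exp (-(t / 2 * Real.exp s)) *
      Real.exp (-(t ^ 2 / (4 * (t / 2 * Real.exp s)))) = Real.exp (-t * Real.cosh s) := by
    rw [← Real.exp_add, Real.cosh_eq, Real.exp_neg s]
    congr 1
    field_simp
    ring
  rw [abs_of_pos hp, smul_eq_mul, gammaKernel, ← h2]
  linear_combination (Real.exp (-(t / 2 * Real.exp s)) *
      Real.exp (-(t ^ 2 / (4 * (t / 2 * Real.exp s))))) * h1

lemma hasDerivWithinAt_half_mul_exp (t s : ℝ) :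
    HasDerivWithinAt (fun s : ℝ => t / 2 * Real.exp s) (t / 2 * Real.exp s) univ s :=
  ((Real.hasDerivAt_exp s).const_mul _).hasDerivWithinAt

lemma injOn_half_mul_exp {t : ℝ} (ht : 0 < t) :
    InjOn (fun s : ℝ => t / 2 * Real.exp s) univ := fun x _ y _ hxy =>
  Real.exp_injective (mul_left_cancel₀ (by positivity : t / 2 ≠ 0) hxy)

lemma integrable_exp_cosh_mul_exp {a t : ℝ} (ha : 0 < a) (ht : 0 < t) :
    Integrable fun s : ℝ => Real.exp (-t * Real.cosh s) * Real.exp (a * s) := by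
  have h := gammaKernel_integrableOn ha t
  rw [← image_half_mul_exp ht, integrableOn_image_iff_integrableOn_abs_deriv_smul
    MeasurableSet.univ (fun s _ => hasDerivWithinAt_half_mul_exp t s) (injOn_half_mul_exp ht)] at h
  simp only [gammaKernel_comp a ht] at h
  rw [integrableOn_univ] at h
  have hne : (t / 2) ^ a ≠ 0 := by positivity
  simpa [inv_mul_cancel_left₀ hne] using h.const_mul ((t / 2) ^ a)⁻¹

lemma integral_gammaKernel (a : ℝ) {t : ℝ} (ht : 0 < t) :
    ∫ u in Ioi (0 : ℝ), gammaKernel a t u =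
      (t / 2) ^ a * ∫ s : ℝ, Real.exp (-t * Real.cosh s) * Real.exp (a * s) := by
  rw [← image_half_mul_exp ht, integral_image_eq_integral_abs_deriv_smul
    MeasurableSet.univ (fun s _ => hasDerivWithinAt_half_mul_exp t s) (injOn_half_mul_exp ht)]
  simp only [gammaKernel_comp a ht]
  rw [setIntegral_univ, integral_const_mul]

/-- On the half-line the exponent `a` may have any sign, since there `e ^ (a s)` is at most
`e ^ ((|a| + 1) s)`. -/
lemma integrableOn_exp_cosh_mul_exp (a : ℝ) {t : ℝ} (ht : 0 < t) :
    IntegrableOn (fun s : ℝ => Real.exp (-t * Real.cosh s) * Real.exp (a * s)) (Ioi 0) := by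
  refine Integrable.mono' (integrable_exp_cosh_mul_exp (a := |a| + 1) (by positivity) ht).integrableOn
    (by fun_prop) ?_
  filter_upwards [ae_restrict_mem measurableSet_Ioi] with s hs
  rw [Real.norm_eq_abs, abs_of_pos (by positivity)]
  have hs' : (0 : ℝ) ≤ s := le_of_lt hs
  have : a ≤ |a| + 1 := (le_abs_self a).trans (by linarith)
  gcongr

lemma integrableOn_besselK (ν : ℝ) {t : ℝ} (ht : 0 < t) :
    IntegrableOn (fun s : ℝ => Real.exp (-t * Real.cosh s) * Real.cosh (ν * s)) (Ioi 0) := by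
  refine (((integrableOn_exp_cosh_mul_exp ν ht).add
    (integrableOn_exp_cosh_mul_exp (-ν) ht)).const_mul (1 / 2)).congr
    (Eventually.of_forall fun s => ?_)
  simp only [Pi.add_apply, Real.cosh_eq (ν * s), neg_mul]
  ring

lemma integrableOn_exp_cosh_mul_sinh (ν : ℝ) {t : ℝ} (ht : 0 < t) :
    IntegrableOn (fun s : ℝ => Real.exp (-t * Real.cosh s) * Real.sinh (ν * s)) (Ioi 0) := by
  refine (((integrableOn_exp_cosh_mul_exp ν ht).sub
    (integrableOn_exp_cosh_mul_exp (-ν) ht)).const_mul (1 / 2)).congr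
    (Eventually.of_forall fun s => ?_)
  simp only [Pi.sub_apply, Real.sinh_eq (ν * s), neg_mul]
  ring

/-- The even integrand of `2 K_a` is the symmetrization of `e ^ (-t cosh s) e ^ (a s)`, so
`2 K_a(t)` is the integral of the latter over the whole line. -/
lemma two_mul_besselK {a t : ℝ} (ha : 0 < a) (ht : 0 < t) :
    2 * besselK a t = ∫ s : ℝ, Real.exp (-t * Real.cosh s) * Real.exp (a * s) := by
  have hi := integrable_exp_cosh_mul_exp ha ht
  rw [← intervalIntegral.integral_Iic_add_Ioi (b := 0) hi.integrableOn hi.integrableOn]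
  have h := integral_comp_neg_Ioi 0
    (fun s : ℝ => Real.exp (-t * Real.cosh s) * Real.exp (a * s))
  rw [neg_zero] at h
  rw [← h, ← integral_add hi.comp_neg.integrableOn hi.integrableOn, besselK, ← integral_const_mul]
  congr 1
  ext s
  simp only [Real.cosh_eq (a * s), Real.cosh_neg, mul_neg]
  ring

lemma rpow_mul_besselK {a t : ℝ} (ha : 0 < a) (ht : 0 < t) :
    t ^ a * besselK a t = (2 : ℝ) ^ (a - 1) * ∫ u in Ioi (0 : ℝ), gammaKernel a t u := by
  rw [integral_gammaKernel a ht, ← two_mul_besselK ha ht, Real.div_rpow ht.le (by norm_num),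
    Real.rpow_sub_one (by norm_num)]
  have : (2 : ℝ) ^ a ≠ 0 := by positivity
  field_simp

lemma tendsto_rpow_mul_besselK {a : ℝ} (ha : 0 < a) :
    Tendsto (fun t => t ^ a * besselK a t) (𝓝[>] 0) (𝓝 ((2 : ℝ) ^ (a - 1) * Real.Gamma a)) := by
  refine ((tendsto_integral_gammaKernel ha).const_mul _).congr' ?_
  filter_upwards [self_mem_nhdsWithin] with t ht
  exact (rpow_mul_besselK ha ht).symm

lemma integrand_deriv (ν t s : ℝ) :
    -Real.cosh s * (Real.exp (-t * Real.cosh s) * Real.cosh (ν * s)) =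
      -(1 / 2) * (Real.exp (-t * Real.cosh s) * Real.cosh ((ν + 1) * s) +
        Real.exp (-t * Real.cosh s) * Real.cosh ((ν - 1) * s)) := by
  have h1 : (ν + 1) * s = ν * s + s := by ring
  have h2 : (ν - 1) * s = ν * s - s := by ring
  rw [h1, h2, Real.cosh_add, Real.cosh_sub]
  ring

lemma hasDerivAt_besselK (ν : ℝ) {t : ℝ} (ht : 0 < t) :
    HasDerivAt (besselK ν) (-(1 / 2) * (besselK (ν + 1) t + besselK (ν - 1) t)) t := by
  have hint : ∀ {x : ℝ}, 0 < x → IntegrableOn (fun s : ℝ =>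
      -Real.cosh s * (Real.exp (-x * Real.cosh s) * Real.cosh (ν * s))) (Ioi 0) := by
    intro x hx
    simp only [integrand_deriv]
    exact ((integrableOn_besselK (ν + 1) hx).add (integrableOn_besselK (ν - 1) hx)).const_mul _
  have key := (hasDerivAt_integral_of_dominated_loc_of_deriv_le
    (μ := volume.restrict (Ioi (0 : ℝ))) (x₀ := t)
    (F := fun x s => Real.exp (-x * Real.cosh s) * Real.cosh (ν * s))
    (F' := fun x s => -Real.cosh s * (Real.exp (-x * Real.cosh s) * Real.cosh (ν * s)))
    (bound := fun s => ‖-Real.cosh s * (Real.exp (-(t / 2) * Real.cosh s) * Real.cosh (ν * s))‖)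
    (Metric.ball_mem_nhds t (half_pos ht))
    (Eventually.of_forall fun x => by fun_prop) (integrableOn_besselK ν ht) (by fun_prop)
    (Eventually.of_forall fun s x hx => ?_) (hint (half_pos ht)).norm
    (Eventually.of_forall fun s x hx => ?_)).2
  · have hval : ∫ s in Ioi (0 : ℝ),
        -Real.cosh s * (Real.exp (-t * Real.cosh s) * Real.cosh (ν * s)) =
        -(1 / 2) * (besselK (ν + 1) t + besselK (ν - 1) t) := by
      simp only [integrand_deriv]
      rw [integral_const_mul, integral_add (integrableOn_besselK (ν + 1) ht)
        (integrableOn_besselK (ν - 1) ht)]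
      rfl
    rw [← hval]
    exact key
  · have hx' : t / 2 ≤ x := by
      rw [Metric.mem_ball, Real.dist_eq, abs_lt] at hx
      linarith [hx.1]
    have hc := Real.cosh_pos s
    simp only [norm_mul, Real.norm_eq_abs, Real.abs_exp]
    gcongr
  · have h := (((hasDerivAt_id x).neg.mul_const (Real.cosh s)).exp).mul_const (Real.cosh (ν * s))
    convert! h using 1
    simp only [Pi.neg_apply, id]
    ring

lemma integrand_by_parts (ν t s : ℝ) :
    Real.exp (-t * Real.cosh s) * (-t * Real.sinh s) * Real.sinh (ν * s) +
        Real.exp (-t * Real.cosh s) * (Real.cosh (ν * s) * ν) =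
      ν * (Real.exp (-t * Real.cosh s) * Real.cosh (ν * s)) -
        t / 2 * (Real.exp (-t * Real.cosh s) * Real.cosh ((ν + 1) * s) -
          Real.exp (-t * Real.cosh s) * Real.cosh ((ν - 1) * s)) := by
  have h1 : (ν + 1) * s = ν * s + s := by ring
  have h2 : (ν - 1) * s = ν * s - s := by ring
  rw [h1, h2, Real.cosh_add, Real.cosh_sub]
  ring

/-- The recurrence `ν K_ν = (t / 2) (K_{ν+1} - K_{ν-1})`, obtained by integrating the derivative
of `e ^ (-t cosh s) sinh (ν s)`, which vanishes at both ends of the half-line. -/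
lemma mul_besselK (ν : ℝ) {t : ℝ} (ht : 0 < t) :
    ν * besselK ν t = t / 2 * (besselK (ν + 1) t - besselK (ν - 1) t) := by
  have hd : ∀ s : ℝ, HasDerivAt (fun s => Real.exp (-t * Real.cosh s) * Real.sinh (ν * s))
      (ν * (Real.exp (-t * Real.cosh s) * Real.cosh (ν * s)) -
        t / 2 * (Real.exp (-t * Real.cosh s) * Real.cosh ((ν + 1) * s) -
          Real.exp (-t * Real.cosh s) * Real.cosh ((ν - 1) * s))) s := by
    intro s
    rw [← integrand_by_parts]
    have h2 : HasDerivAt (fun s => Real.sinh (ν * s)) (Real.cosh (ν * s) * ν) s := by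
      simpa using ((hasDerivAt_id s).const_mul ν).sinh
    exact (((Real.hasDerivAt_cosh s).const_mul (-t)).exp).mul h2
  have h0 := (integrableOn_besselK ν ht).const_mul ν
  have h1 := integrableOn_besselK (ν + 1) ht
  have h2 := integrableOn_besselK (ν - 1) ht
  have h3 : IntegrableOn (fun s => t / 2 * (Real.exp (-t * Real.cosh s) * Real.cosh ((ν + 1) * s) -
      Real.exp (-t * Real.cosh s) * Real.cosh ((ν - 1) * s))) (Ioi 0) :=
    (h1.sub h2).const_mul (t / 2)
  have hI := h0.sub h3
  have hlim := tendsto_zero_of_hasDerivAt_of_integrableOn_Ioi (fun s _ => hd s) hI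
    (integrableOn_exp_cosh_mul_sinh ν ht)
  have h := integral_Ioi_of_hasDerivAt_of_tendsto' (fun s _ => hd s) hI hlim
  rw [integral_sub h0 h3, integral_const_mul, integral_const_mul, integral_sub h1 h2] at h
  change ν * besselK ν t - t / 2 * (besselK (ν + 1) t - besselK (ν - 1) t) = _ at h
  simp only [mul_zero, Real.sinh_zero, sub_zero] at h
  exact sub_eq_zero.1 h

lemma neg_deriv_hEPD_add (μ : ℝ) {t : ℝ} (ht : 0 < t) :
    -deriv (hEPD μ) t + μ * hEPD μ t / t = t ^ ((μ + 1) / 2) * besselK ((μ + 1) / 2) t := by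
  have hd : HasDerivAt (hEPD μ) _ t :=
    (Real.hasDerivAt_rpow_const (p := (μ + 1) / 2) (Or.inl ht.ne')).mul
      (hasDerivAt_besselK ((μ - 1) / 2) ht)
  have hrec := mul_besselK ((μ - 1) / 2) ht
  have hν : (μ - 1) / 2 + 1 = (μ + 1) / 2 := by ring
  rw [hd.deriv, hEPD, Real.rpow_sub_one ht.ne']
  rw [hν] at hrec ⊢
  -- Replacing the values by variables keeps `field_simp` from rewriting the orders of the Bessel functions.
  generalize besselK ((μ - 1) / 2 - 1) t = y at hrec ⊢
  generalize besselK ((μ - 1) / 2) t = x at hrec ⊢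
  generalize besselK ((μ + 1) / 2) t = z at hrec ⊢
  field_simp
  linear_combination 2 * hrec

/-- for `μ > 0`,
`lim_{t→0⁺} (−h'(t) + μ h(t)/t) = 2^{(μ−1)/2} Γ((μ+1)/2) > 0`. -/
theorem hEPD_limit_at_zero (μ : ℝ) (hμ : 0 < μ) :
    Filter.Tendsto (fun t => -deriv (hEPD μ) t + μ * hEPD μ t / t)
      (nhdsWithin 0 (Set.Ioi 0))
      (nhds ((2 : ℝ) ^ ((μ - 1) / 2) * Real.Gamma ((μ + 1) / 2))) ∧
    0 < (2 : ℝ) ^ ((μ - 1) / 2) * Real.Gamma ((μ + 1) / 2) := by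
  have ha : 0 < (μ + 1) / 2 := by linarith
  refine ⟨?_, mul_pos (by positivity) (Real.Gamma_pos_of_pos ha)⟩
  have h := tendsto_rpow_mul_besselK ha
  rw [show (μ + 1) / 2 - 1 = (μ - 1) / 2 by ring] at h
  refine h.congr' ?_
  filter_upwards [self_mem_nhdsWithin] with t ht
  exact (neg_deriv_hEPD_add μ ht).symm
end
end

section
/- Let n ≥ 2, μ > 0, and let q ∈ ℝ satisfy q > −min(1, μ). Define b_q(t,x) := ∫_0^1 h(λt) φ(λx) λ^{q−1} dλ for t > 0 and x ∈ ℝⁿ. Then b_q is smooth on (0,∞)×ℝⁿ and satisfies ∂_t² b_q − Δ_x b_q − ∂_t( μ b_q / t ) = 0 on (0,∞)×ℝⁿ. -/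
/-!
Put `ν = (μ−1)/2`. Inserting the integral formulas for `K_ν` and `φ` gives, for `t > 0`,
`b_q(t,x) = t^{(μ+1)/2} B(t,x)` with
`B(t,x) = ∫ e^{λ(−t cosh s + x·ω)} λ^{ν+q} cosh(νs) dλ ds dσ(ω)` over `(0,1] × (0,∞) × S^{n-1}`
(`bq_eq_laplaceInt`). The exponent is linear in `(t,x)`, so `B` is the Laplace transform of a
positive measure.

Smoothness. A Laplace transform is smooth on every open set where it converges: an exponential
margin absorbs the polynomial factors produced by differentiation (`Admissible`,
`contDiffOn_laplaceInt_nat`). Convergence for all `t > 0` is `admissible_wt`: the condition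
`q > −min(1,μ)` means `|ν| < ν + q + 1`, and for an exponent `γ` in between, `e^{−y} ≤ C y^{−γ}`
bounds the integrand by an integrable product of functions of `λ` and of `s`.

Equation. Conjugation by `t^{(μ+1)/2}` reduces the claim to
`t² B_tt + t B_t − ν² B − t² ΔB = 0` (`deriv_conj`). As `|ω| = 1`, the left side has integrand
`e^{−τ cosh s} cosh(νs) (τ² sinh² s − τ cosh s − ν²)` times a function of `(λ,ω)`, where `τ = λt`.
Its integral over `s` is zero, because it is an exact `s`-derivative with vanishing boundary terms
(`integral_bessel_eq_zero`).
-/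

noncomputable section

open MeasureTheory
open scoped RealInnerProductSpace

/-- `b_q(t,x) = ∫_0^1 h(λt) φ(λx) λ^{q−1} dλ`. -/
def bq (n : ℕ) (μ q : ℝ) (t : ℝ) (x : EuclideanSpace ℝ (Fin n)) : ℝ :=
  ∫ lam in Set.Ioc (0 : ℝ) 1, hEPD μ (lam * t) * phi n (lam • x) * lam ^ (q - 1)

/-- The Laplacian of `f : ℝⁿ → ℝ`, as the sum of the second derivatives in the
coordinate directions. -/
def lap (n : ℕ) (f : EuclideanSpace ℝ (Fin n) → ℝ) (x : EuclideanSpace ℝ (Fin n)) : ℝ :=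
  ∑ i : Fin n, fderiv ℝ (fun y => fderiv ℝ f y (EuclideanSpace.single i 1)) x
    (EuclideanSpace.single i 1)

/-! ### Smoothness of exponential integrals -/

section Laplace

variable {A E G : Type} [MeasurableSpace A] [NormedAddCommGroup E] [NormedSpace ℝ E]
  [NormedAddCommGroup G] [NormedSpace ℝ G]

/-- The amplitude `T` is admissible for the exponents `ℓ` on `U`: near every `p ∈ U` the integrand
`e^{ℓ_a(p)} T(a)` is integrable with a margin `ε` in the exponent. The margin absorbs the powers
of `‖ℓ a‖` created by differentiating in `p`, so admissibility is inherited by derivatives. -/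
def Admissible (m : Measure A) (ℓ : A → E →L[ℝ] ℝ) (U : Set E) (T : A → G) : Prop :=
  AEStronglyMeasurable T m ∧ ∀ p ∈ U, ∃ ε > 0,
    Integrable (fun a => Real.exp (ℓ a p + ε * ‖ℓ a‖) * ‖T a‖) m

/-- The exponential integral `p ↦ ∫ e^{ℓ_a(p)} T(a) dm(a)`. -/
def laplaceInt (m : Measure A) (ℓ : A → E →L[ℝ] ℝ) (T : A → G) (p : E) : G :=
  ∫ a, Real.exp (ℓ a p) • T a ∂m

variable {m : Measure A} {ℓ : A → E →L[ℝ] ℝ} {U : Set E}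

theorem aesm_exp (hℓ : AEStronglyMeasurable ℓ m) (p : E) :
    AEStronglyMeasurable (fun a => Real.exp (ℓ a p)) m :=
  Real.continuous_exp.comp_aestronglyMeasurable (hℓ.apply_continuousLinearMap p)

theorem Admissible.integrable {T : A → G} (hT : Admissible m ℓ U T)
    (hℓ : AEStronglyMeasurable ℓ m) {p : E} (hp : p ∈ U) :
    Integrable (fun a => Real.exp (ℓ a p) • T a) m := by
  obtain ⟨ε, hε, hI⟩ := hT.2 p hp
  refine hI.mono' ((aesm_exp hℓ p).smul hT.1) (.of_forall fun a => ?_)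
  rw [norm_smul, Real.norm_of_nonneg (Real.exp_pos _).le]
  gcongr
  have : 0 ≤ ε * ‖ℓ a‖ := by positivity
  linarith

theorem Admissible.clm {G' : Type} [NormedAddCommGroup G'] [NormedSpace ℝ G'] {T : A → G}
    (hT : Admissible m ℓ U T) (hℓ : AEStronglyMeasurable ℓ m) (L : G →L[ℝ] G') :
    Admissible m ℓ U (fun a => L (T a)) := by
  refine ⟨L.continuous.comp_aestronglyMeasurable hT.1, fun p hp => ?_⟩
  obtain ⟨ε, hε, hI⟩ := hT.2 p hp
  refine ⟨ε, hε, (hI.const_mul ‖L‖).mono' ?_ (.of_forall fun a => ?_)⟩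
  · refine AEStronglyMeasurable.mul (Real.continuous_exp.comp_aestronglyMeasurable
      ((hℓ.apply_continuousLinearMap p).add (hℓ.norm.const_mul ε))) ?_
    exact (L.continuous.comp_aestronglyMeasurable hT.1).norm
  · rw [Real.norm_of_nonneg (by positivity), mul_left_comm]
    gcongr
    exact L.le_opNorm _

/-- Half of the exponential margin absorbs one power of `x`. -/
theorem mul_exp_half_le {ε x : ℝ} (hε : 0 < ε) :
    Real.exp (ε / 2 * x) * x ≤ 2 / ε * Real.exp (ε * x) := by
  have h1 : ε / 2 * x ≤ Real.exp (ε / 2 * x) := by linarith [Real.add_one_le_exp (ε / 2 * x)]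
  have h2 : x ≤ 2 / ε * Real.exp (ε / 2 * x) := by
    calc x = 2 / ε * (ε / 2 * x) := by field_simp
      _ ≤ _ := by gcongr
  calc _ ≤ Real.exp (ε / 2 * x) * (2 / ε * Real.exp (ε / 2 * x)) := by gcongr
    _ = 2 / ε * (Real.exp (ε / 2 * x) * Real.exp (ε / 2 * x)) := by ring
    _ = _ := by rw [← Real.exp_add]; ring_nf

theorem aesm_smulRight {T : A → G} (hT : AEStronglyMeasurable T m)
    (hℓ : AEStronglyMeasurable ℓ m) :
    AEStronglyMeasurable (fun a => (ℓ a).smulRight (T a)) m := by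
  have h : Continuous (fun z : (E →L[ℝ] ℝ) × G => z.1.smulRight z.2) := by
    exact ((ContinuousLinearMap.smulRightL ℝ E G).continuous₂)
  exact h.comp_aestronglyMeasurable (hℓ.prodMk hT)

theorem exp_bound {ε x : ℝ} {c : ℝ} {y : ℝ} (hε : 0 < ε) (hy : 0 ≤ y) :
    Real.exp (c + ε / 2 * x) * (x * y) ≤ 2 / ε * (Real.exp (c + ε * x) * y) := by
  rw [Real.exp_add, Real.exp_add]
  calc _ = Real.exp c * y * (Real.exp (ε / 2 * x) * x) := by ring
    _ ≤ Real.exp c * y * (2 / ε * Real.exp (ε * x)) := by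
      gcongr ?_ * ?_
      exact mul_exp_half_le hε
    _ = _ := by ring

/-- The amplitude of the derivative is again admissible: half of the margin pays for the extra
factor `‖ℓ a‖`. -/
theorem Admissible.smulRight {T : A → G} (hT : Admissible m ℓ U T)
    (hℓ : AEStronglyMeasurable ℓ m) : Admissible m ℓ U (fun a => (ℓ a).smulRight (T a)) := by
  refine ⟨aesm_smulRight hT.1 hℓ, fun p hp => ?_⟩
  obtain ⟨ε, hε, hI⟩ := hT.2 p hp
  refine ⟨ε / 2, half_pos hε, (hI.const_mul (2 / ε)).mono' ?_ (.of_forall fun a => ?_)⟩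
  · exact AEStronglyMeasurable.mul (Real.continuous_exp.comp_aestronglyMeasurable
      ((hℓ.apply_continuousLinearMap p).add (hℓ.norm.const_mul _))) (aesm_smulRight hT.1 hℓ).norm
  · rw [Real.norm_of_nonneg (by positivity), ContinuousLinearMap.norm_smulRight_apply]
    exact exp_bound hε (norm_nonneg _)

/-- Differentiation under the integral sign, dominated on the ball of radius half the margin. -/
theorem Admissible.hasFDerivAt {T : A → G} (hT : Admissible m ℓ U T)
    (hℓ : AEStronglyMeasurable ℓ m) {p : E} (hp : p ∈ U) :
    HasFDerivAt (laplaceInt m ℓ T) (laplaceInt m ℓ (fun a => (ℓ a).smulRight (T a)) p) p := by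
  obtain ⟨ε, hε, hI⟩ := hT.2 p hp
  refine hasFDerivAt_integral_of_dominated_of_fderiv_le
    (F := fun p a => Real.exp (ℓ a p) • T a)
    (F' := fun p a => Real.exp (ℓ a p) • (ℓ a).smulRight (T a))
    (Metric.ball_mem_nhds p (half_pos hε)) ?_ (hT.integrable hℓ hp)
    ((aesm_exp hℓ p).smul (aesm_smulRight hT.1 hℓ)) (.of_forall fun a x hx => ?_)
    (hI.const_mul (2 / ε)) (.of_forall fun a x hx => ?_)
  · exact .of_forall fun x => (aesm_exp hℓ x).smul hT.1
  · rw [norm_smul, Real.norm_of_nonneg (Real.exp_pos _).le,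
      ContinuousLinearMap.norm_smulRight_apply]
    refine le_trans ?_ (exp_bound hε (norm_nonneg _))
    gcongr
    have h1 : ℓ a x - ℓ a p ≤ ‖ℓ a‖ * ‖x - p‖ := by
      rw [← map_sub]; exact (le_abs_self _).trans ((ℓ a).le_opNorm _)
    have h2 : ‖ℓ a‖ * ‖x - p‖ ≤ ‖ℓ a‖ * (ε / 2) := by
      gcongr
      exact (mem_ball_iff_norm.1 hx).le
    linarith
  · have h := ((Real.hasDerivAt_exp (ℓ a x)).comp_hasFDerivAt x (ℓ a).hasFDerivAt).smul_const (T a)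
    refine h.congr_fderiv ?_
    ext v
    simp [smul_smul]

/-- The derivative in the direction `v` is the exponential integral with amplitude `ℓ_a(v) T(a)`. -/
theorem Admissible.fderiv_apply [CompleteSpace G] {T : A → G} (hT : Admissible m ℓ U T)
    (hℓ : AEStronglyMeasurable ℓ m) {p : E} (hp : p ∈ U) (v : E) :
    laplaceInt m ℓ (fun a => (ℓ a).smulRight (T a)) p v
      = laplaceInt m ℓ (fun a => ℓ a v • T a) p := by
  rw [laplaceInt, ContinuousLinearMap.integral_apply ((hT.smulRight hℓ).integrable hℓ hp)]
  rfl

theorem Admissible.dir {T : A → G} (hT : Admissible m ℓ U T)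
    (hℓ : AEStronglyMeasurable ℓ m) (v : E) : Admissible m ℓ U (fun a => ℓ a v • T a) :=
  (hT.smulRight hℓ).clm hℓ (ContinuousLinearMap.apply ℝ G v)

/-- Induction on the order: the derivative is an integral of the same type. -/
theorem contDiffOn_laplaceInt_nat (hℓ : AEStronglyMeasurable ℓ m) (hU : IsOpen U) (k : ℕ) :
    ∀ {G : Type} [NormedAddCommGroup G] [NormedSpace ℝ G] {T : A → G},
      Admissible m ℓ U T → ContDiffOn ℝ k (laplaceInt m ℓ T) U := by
  induction k with
  | zero =>
    intro G _ _ T hT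
    exact contDiffOn_zero.2 fun p hp =>
      (hT.hasFDerivAt hℓ hp).continuousAt.continuousWithinAt
  | succ k ih =>
    intro G _ _ T hT
    rw [Nat.cast_add, Nat.cast_one, contDiffOn_succ_iff_fderiv_of_isOpen hU]
    refine ⟨fun p hp => (hT.hasFDerivAt hℓ hp).differentiableAt.differentiableWithinAt,
      by simp, ?_⟩
    exact (ih (hT.smulRight hℓ)).congr fun p hp => (hT.hasFDerivAt hℓ hp).fderiv

end Laplace

/-! ### Decay estimates and the integrated Bessel equation -/

theorem exp_neg_le_rpow {γ y : ℝ} (hγ : 0 < γ) (hy : 0 < y) :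
    Real.exp (-y) ≤ γ ^ γ * y ^ (-γ) := by
  have h1 : y ≤ γ * Real.exp (y / γ) := by
    calc y = γ * (y / γ) := by field_simp
      _ ≤ _ := by gcongr; linarith [Real.add_one_le_exp (y / γ)]
  have h2 : y ^ γ ≤ γ ^ γ * Real.exp y := by
    calc y ^ γ ≤ (γ * Real.exp (y / γ)) ^ γ := by gcongr
      _ = γ ^ γ * Real.exp y := by
        rw [Real.mul_rpow hγ.le (Real.exp_pos _).le, ← Real.exp_mul, div_mul_cancel₀ _ hγ.ne']
  have h3 : 0 < y ^ γ := Real.rpow_pos_of_pos hy _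
  rw [Real.exp_neg, Real.rpow_neg hy.le, ← div_eq_mul_inv, le_div_iff₀ h3,
    inv_mul_le_iff₀ (Real.exp_pos _)]
  linarith

/-- The super-exponential decay in `s`, in a form where the dependence on `κ` is an explicit power.
-/
theorem exp_cosh_le {γ κ : ℝ} (hγ : 0 < γ) (hκ : 0 < κ) (s : ℝ) :
    Real.exp (-(κ * Real.cosh s)) ≤ γ ^ γ * (κ / 2) ^ (-γ) * Real.exp (-γ * s) := by
  have h1 : κ / 2 * Real.exp s ≤ κ * Real.cosh s := by
    rw [Real.cosh_eq]
    have := Real.exp_pos (-s)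
    nlinarith
  calc _ ≤ Real.exp (-(κ / 2 * Real.exp s)) := by gcongr
    _ ≤ _ := exp_neg_le_rpow hγ (by positivity)
    _ = _ := by
      rw [Real.mul_rpow (by positivity) (Real.exp_pos _).le, ← Real.exp_mul, mul_assoc]
      ring_nf

theorem cosh_mul_le (ν : ℝ) {s : ℝ} (hs : 0 ≤ s) : Real.cosh (ν * s) ≤ Real.exp (|ν| * s) := by
  rw [← Real.cosh_abs, abs_mul, abs_of_nonneg hs, Real.cosh_eq]
  have : Real.exp (-(|ν| * s)) ≤ Real.exp (|ν| * s) := by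
    gcongr
    have : 0 ≤ |ν| * s := by positivity
    linarith
  linarith

theorem abs_sinh_mul_le (ν : ℝ) {s : ℝ} (hs : 0 ≤ s) :
    |Real.sinh (ν * s)| ≤ Real.exp (|ν| * s) :=
  (by rw [Real.abs_sinh, ← Real.cosh_abs (ν * s)]; exact (Real.sinh_lt_cosh _).le :
    |Real.sinh (ν * s)| ≤ Real.cosh (ν * s)).trans (cosh_mul_le ν hs)

/-- The modified Bessel equation for `K_ν`, written under the integral sign: the integrand is the
`s`-derivative of `(∂_s E) cosh(νs) − ν E sinh(νs)` with `E = e^{−τ cosh s}`, which vanishes at `0`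
and at `∞`. -/
theorem integral_bessel_eq_zero (ν : ℝ) {τ : ℝ} (hτ : 0 < τ) :
    ∫ s in Set.Ioi (0 : ℝ), Real.exp (-(τ * Real.cosh s)) * Real.cosh (ν * s) *
      (τ ^ 2 * Real.sinh s ^ 2 - τ * Real.cosh s - ν ^ 2) = 0 := by
  by_cases hI : IntegrableOn (fun s => Real.exp (-(τ * Real.cosh s)) * Real.cosh (ν * s) *
      (τ ^ 2 * Real.sinh s ^ 2 - τ * Real.cosh s - ν ^ 2)) (Set.Ioi (0 : ℝ))
  swap
  -- A non-integrable function has Bochner integral zero, so this case needs no decay estimate.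
  · exact integral_undef hI
  have hd : ∀ s ∈ Set.Ici (0 : ℝ), HasDerivAt
      (fun s => -(Real.exp (-(τ * Real.cosh s)) *
        (τ * Real.sinh s * Real.cosh (ν * s) + ν * Real.sinh (ν * s))))
      (Real.exp (-(τ * Real.cosh s)) * Real.cosh (ν * s) *
        (τ ^ 2 * Real.sinh s ^ 2 - τ * Real.cosh s - ν ^ 2)) s := by
    intro s _
    have hν : HasDerivAt (fun s => ν * s) ν s := by
      simpa using (hasDerivAt_id s).const_mul ν
    have h1 := ((Real.hasDerivAt_cosh s).const_mul τ).neg.exp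
    have h2 := ((Real.hasDerivAt_sinh s).const_mul τ).mul hν.cosh
    have h3 := hν.sinh.const_mul ν
    refine ((h1.mul (h2.add h3)).neg).congr_deriv ?_
    simp only [Pi.mul_apply, Pi.add_apply, Pi.neg_apply]
    ring
  have hlim : Filter.Tendsto (fun s => -(Real.exp (-(τ * Real.cosh s)) *
        (τ * Real.sinh s * Real.cosh (ν * s) + ν * Real.sinh (ν * s))))
      Filter.atTop (nhds 0) := by
    have hγ : 0 < 2 + |ν| := by positivity
    -- The factors `sinh s` and `cosh (ν s)` grow like `e^{(1+|ν|)s}`; rate `2 + |ν|` leaves `e^{-s}`.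
    set C := (2 + |ν|) ^ (2 + |ν|) * (τ / 2) ^ (-(2 + |ν|)) * (τ + |ν|) with hC
    have h0 : Filter.Tendsto (fun s : ℝ => C * Real.exp (-s)) Filter.atTop (nhds 0) := by
      simpa using (Real.tendsto_exp_neg_atTop_nhds_zero).const_mul C
    refine squeeze_zero_norm' ?_ h0
    filter_upwards [Filter.eventually_ge_atTop 0] with s hs
    have e1 := exp_cosh_le hγ hτ s
    have e2 := cosh_mul_le ν hs
    have e3 := abs_sinh_mul_le ν hs
    have e4 : |Real.sinh s| ≤ Real.exp s := by simpa using abs_sinh_mul_le 1 hs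
    have e5 : |τ * Real.sinh s * Real.cosh (ν * s) + ν * Real.sinh (ν * s)|
        ≤ (τ + |ν|) * (Real.exp s * Real.exp (|ν| * s)) := by
      have hes : 1 ≤ Real.exp s := Real.one_le_exp hs
      calc _ ≤ |τ * Real.sinh s * Real.cosh (ν * s)| + |ν * Real.sinh (ν * s)| := abs_add_le _ _
        _ = τ * |Real.sinh s| * Real.cosh (ν * s) + |ν| * (1 * |Real.sinh (ν * s)|) := by
          simp only [abs_mul, abs_of_pos hτ, abs_of_pos (Real.cosh_pos (ν * s)), one_mul]
        _ ≤ τ * Real.exp s * Real.exp (|ν| * s) + |ν| * (Real.exp s * Real.exp (|ν| * s)) := by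
          gcongr
        _ = _ := by ring
    rw [norm_neg, norm_mul, Real.norm_of_nonneg (Real.exp_pos _).le, Real.norm_eq_abs]
    calc _ ≤ ((2 + |ν|) ^ (2 + |ν|) * (τ / 2) ^ (-(2 + |ν|)) * Real.exp (-(2 + |ν|) * s)) *
          ((τ + |ν|) * (Real.exp s * Real.exp (|ν| * s))) := by gcongr
      _ = C * (Real.exp (-(2 + |ν|) * s) * (Real.exp s * Real.exp (|ν| * s))) := by
        rw [hC]; ring
      _ = C * Real.exp (-s) := by rw [← Real.exp_add, ← Real.exp_add]; ring_nf
  rw [integral_Ioi_of_hasDerivAt_of_tendsto' hd hI hlim]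
  simp

/-! ### The representing measure of `b_q` -/

/-- The measure `dλ ds dσ(ω)` on `(0,1] × (0,∞) × S^{n-1}`. -/
def paramMeasure (n : ℕ) :
    Measure (ℝ × (ℝ × Metric.sphere (0 : EuclideanSpace ℝ (Fin n)) 1)) :=
  (volume.restrict (Set.Ioc (0 : ℝ) 1)).prod ((volume.restrict (Set.Ioi (0 : ℝ))).prod
    (sphMeasure n))

/-- The linear functional `(t,x) ↦ λ(−t cosh s + x·ω)`. -/
def ell (n : ℕ) (a : ℝ × (ℝ × Metric.sphere (0 : EuclideanSpace ℝ (Fin n)) 1)) :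
    (ℝ × EuclideanSpace ℝ (Fin n)) →L[ℝ] ℝ :=
  (-(a.1 * Real.cosh a.2.1)) • ContinuousLinearMap.fst ℝ ℝ (EuclideanSpace ℝ (Fin n)) +
    a.1 • (innerSL ℝ (a.2.2 : EuclideanSpace ℝ (Fin n))).comp
      (ContinuousLinearMap.snd ℝ ℝ (EuclideanSpace ℝ (Fin n)))

/-- The weight `λ^{ν+q} cosh(νs)` with `ν = (μ−1)/2`. -/
def wt (n : ℕ) (μ q : ℝ) (a : ℝ × (ℝ × Metric.sphere (0 : EuclideanSpace ℝ (Fin n)) 1)) : ℝ :=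
  a.1 ^ ((μ - 1) / 2 + q) * Real.cosh ((μ - 1) / 2 * a.2.1)

instance (n : ℕ) : IsFiniteMeasure (sphMeasure n) := by
  unfold sphMeasure; infer_instance

theorem ell_apply (n : ℕ) (a : ℝ × (ℝ × Metric.sphere (0 : EuclideanSpace ℝ (Fin n)) 1))
    (p : ℝ × EuclideanSpace ℝ (Fin n)) :
    ell n a p = -(a.1 * Real.cosh a.2.1) * p.1 +
      a.1 * ⟪(a.2.2 : EuclideanSpace ℝ (Fin n)), p.2⟫ := by
  simp [ell]

theorem aesm_ell (n : ℕ) : AEStronglyMeasurable (ell n) (paramMeasure n) := by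
  refine Continuous.aestronglyMeasurable ?_
  unfold ell
  have h1 : Continuous (fun a : ℝ × (ℝ × Metric.sphere (0 : EuclideanSpace ℝ (Fin n)) 1) =>
      -(a.1 * Real.cosh a.2.1)) := by fun_prop
  have h2 : Continuous (fun a : ℝ × (ℝ × Metric.sphere (0 : EuclideanSpace ℝ (Fin n)) 1) =>
      innerSL ℝ (a.2.2 : EuclideanSpace ℝ (Fin n))) :=
    (innerSL ℝ).continuous.comp (by fun_prop)
  exact (h1.smul continuous_const).add (continuous_fst.smul (h2.clm_comp continuous_const))

theorem ae_fst (n : ℕ) : ∀ᵐ a ∂(paramMeasure n), a.1 ∈ Set.Ioc (0 : ℝ) 1 :=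
  Measure.quasiMeasurePreserving_fst.ae (ae_restrict_mem measurableSet_Ioc)

theorem ae_snd (n : ℕ) : ∀ᵐ a ∂(paramMeasure n), a.2.1 ∈ Set.Ioi (0 : ℝ) :=
  Measure.quasiMeasurePreserving_snd.ae
    (Measure.quasiMeasurePreserving_fst.ae (ae_restrict_mem measurableSet_Ioi))

theorem norm_ell_le {n : ℕ} {a : ℝ × (ℝ × Metric.sphere (0 : EuclideanSpace ℝ (Fin n)) 1)}
    (ha : 0 < a.1) : ‖ell n a‖ ≤ 2 * (a.1 * Real.cosh a.2.1) := by
  have hc := Real.one_le_cosh a.2.1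
  refine ContinuousLinearMap.opNorm_le_bound _ (by positivity) fun p => ?_
  have hω : ‖(a.2.2 : EuclideanSpace ℝ (Fin n))‖ = 1 := by simp
  have h1 : ‖p.1‖ ≤ ‖p‖ := norm_fst_le p
  have h2 : ‖⟪(a.2.2 : EuclideanSpace ℝ (Fin n)), p.2⟫‖ ≤ ‖p‖ :=
    (norm_inner_le_norm _ _).trans (by rw [hω, one_mul]; exact norm_snd_le p)
  rw [ell_apply]
  calc _ ≤ ‖-(a.1 * Real.cosh a.2.1) * p.1‖ + ‖a.1 * ⟪(a.2.2 : EuclideanSpace ℝ (Fin n)), p.2⟫‖ :=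
        norm_add_le _ _
    _ = a.1 * Real.cosh a.2.1 * ‖p.1‖ + a.1 * 1 * ‖⟪(a.2.2 : EuclideanSpace ℝ (Fin n)), p.2⟫‖ := by
        rw [norm_mul, norm_neg, norm_mul, norm_mul, Real.norm_of_nonneg ha.le,
          Real.norm_of_nonneg (Real.cosh_pos _).le, mul_one]
    _ ≤ a.1 * Real.cosh a.2.1 * ‖p‖ + a.1 * Real.cosh a.2.1 * ‖p‖ := by gcongr
    _ = _ := by ring

/-- With the margin `t/4`, half of the decay of the integrand survives, since
`‖ell n a‖ ≤ 2 λ cosh s`. -/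
theorem exp_ell_le {n : ℕ} {a : ℝ × (ℝ × Metric.sphere (0 : EuclideanSpace ℝ (Fin n)) 1)}
    (ha : a.1 ∈ Set.Ioc (0 : ℝ) 1) {t : ℝ} (ht : 0 < t) (x : EuclideanSpace ℝ (Fin n)) :
    Real.exp (ell n a (t, x) + t / 4 * ‖ell n a‖)
      ≤ Real.exp ‖x‖ * Real.exp (-(t / 2 * a.1 * Real.cosh a.2.1)) := by
  rw [← Real.exp_add]
  refine Real.exp_le_exp.2 ?_
  have h1 := mul_le_mul_of_nonneg_left (norm_ell_le (n := n) ha.1) (by positivity : 0 ≤ t / 4)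
  have hω : ‖(a.2.2 : EuclideanSpace ℝ (Fin n))‖ = 1 := by simp
  have h2 : ⟪(a.2.2 : EuclideanSpace ℝ (Fin n)), x⟫ ≤ ‖x‖ :=
    (real_inner_le_norm _ _).trans (by rw [hω, one_mul])
  have h3 : a.1 * ⟪(a.2.2 : EuclideanSpace ℝ (Fin n)), x⟫ ≤ ‖x‖ :=
    (mul_le_mul_of_nonneg_left h2 ha.1.le).trans
      (mul_le_of_le_one_left (norm_nonneg _) ha.2)
  rw [ell_apply]
  simp only
  linarith

/-- The condition `q > −min(1,μ)` says exactly `|ν| < ν + q + 1` for `ν = (μ−1)/2`, which leaves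
room for an exponent `γ` strictly in between. Then `e^{−y} ≤ C y^{−γ}` separates the variables:
`λ^{ν+q−γ}` is integrable at `0` and `e^{−(γ−|ν|)s}` is integrable at `∞`. -/
theorem admissible_wt (n : ℕ) {μ q : ℝ} (hq : -min 1 μ < q) :
    Admissible (paramMeasure n) (ell n) (Set.Ioi 0 ×ˢ Set.univ) (wt n μ q) := by
  have hwm : AEStronglyMeasurable (wt n μ q) (paramMeasure n) := by
    refine Measurable.aestronglyMeasurable ?_
    unfold wt
    fun_prop
  refine ⟨hwm, ?_⟩
  rintro ⟨t, x⟩ ⟨ht, -⟩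
  replace ht : 0 < t := ht
  refine ⟨t / 4, by positivity, ?_⟩
  set ν := (μ - 1) / 2 with hν
  have hνq : |ν| < ν + q + 1 := by
    have h1 := min_le_left (1 : ℝ) μ
    have h2 := min_le_right (1 : ℝ) μ
    rcases min_cases (1 : ℝ) μ with h | h <;> rw [abs_lt] <;> constructor <;> linarith
  obtain ⟨γ, hγ1, hγ2⟩ := exists_between hνq
  have hγ : 0 < γ := (abs_nonneg ν).trans_lt hγ1
  set C := Real.exp ‖x‖ * (γ ^ γ * (t / 2 / 2) ^ (-γ)) with hC
  have i1 : Integrable (fun l : ℝ => l ^ (ν + q - γ)) (volume.restrict (Set.Ioc (0 : ℝ) 1)) :=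
    (intervalIntegrable_iff_integrableOn_Ioc_of_le zero_le_one).1
      (intervalIntegral.intervalIntegrable_rpow' (by linarith))
  have i2 : Integrable (fun s : ℝ => Real.exp (-(γ - |ν|) * s))
      (volume.restrict (Set.Ioi (0 : ℝ))) := exp_neg_integrableOn_Ioi 0 (by linarith)
  have i3 : Integrable (fun _ : Metric.sphere (0 : EuclideanSpace ℝ (Fin n)) 1 => (1 : ℝ))
      (sphMeasure n) := integrable_const _
  have i4 := (i1.mul_prod (i2.mul_prod i3)).const_mul C
  refine Integrable.mono' i4 ?_ ?_
  · exact AEStronglyMeasurable.mul (Real.continuous_exp.comp_aestronglyMeasurable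
      (((aesm_ell n).apply_continuousLinearMap _).add ((aesm_ell n).norm.const_mul _))) hwm.norm
  filter_upwards [ae_fst n, ae_snd n] with a ha hs
  have hs' : (0 : ℝ) ≤ a.2.1 := le_of_lt hs
  have hl : 0 < a.1 := ha.1
  have e1 := exp_ell_le ha ht x
  have e2 := exp_cosh_le hγ (by positivity : 0 < t / 2 * a.1) a.2.1
  have e3 := cosh_mul_le ν hs'
  have e4 : ‖wt n μ q a‖ ≤ a.1 ^ (ν + q) * Real.exp (|ν| * a.2.1) := by
    unfold wt
    rw [norm_mul, Real.norm_of_nonneg (Real.rpow_nonneg hl.le _),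
      Real.norm_of_nonneg (Real.cosh_pos _).le]
    gcongr
  rw [Real.norm_of_nonneg (by positivity)]
  calc _ ≤ (Real.exp ‖x‖ * (γ ^ γ * (t / 2 * a.1 / 2) ^ (-γ) * Real.exp (-γ * a.2.1))) *
        (a.1 ^ (ν + q) * Real.exp (|ν| * a.2.1)) := by
        gcongr
        exact e1.trans (by gcongr)
    _ = C * (a.1 ^ (ν + q) * a.1 ^ (-γ) *
        (Real.exp (-γ * a.2.1) * Real.exp (|ν| * a.2.1) * 1)) := by
        rw [hC, show t / 2 * a.1 / 2 = t / 2 / 2 * a.1 by ring,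
          Real.mul_rpow (by positivity) hl.le]
        ring
    _ = _ := by
        rw [← Real.rpow_add hl, ← Real.exp_add]
        ring_nf

/-- Fubini: apart from the power `t^{(μ+1)/2}`, `b_q` is an exponential integral over `(λ, s, ω)`. -/
theorem bq_eq_laplaceInt {n : ℕ} {μ q : ℝ} (hq : -min 1 μ < q) {t : ℝ} (ht : 0 < t)
    (x : EuclideanSpace ℝ (Fin n)) :
    bq n μ q t x =
      t ^ ((μ + 1) / 2) * laplaceInt (paramMeasure n) (ell n) (wt n μ q) (t, x) := by
  have hI := (admissible_wt n hq).integrable (aesm_ell n) (p := (t, x)) ⟨ht, trivial⟩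
  rw [laplaceInt]
  unfold paramMeasure at hI ⊢
  rw [integral_prod _ hI, ← integral_const_mul, bq]
  refine setIntegral_congr_fun measurableSet_Ioc fun l hl => ?_
  have hl0 : 0 < l := hl.1
  have e1 : ∀ z : ℝ × Metric.sphere (0 : EuclideanSpace ℝ (Fin n)) 1,
      Real.exp (ell n (l, z) (t, x)) • wt n μ q (l, z) =
      l ^ ((μ - 1) / 2 + q) * ((Real.exp (-(l * t) * Real.cosh z.1) *
        Real.cosh ((μ - 1) / 2 * z.1)) *
          Real.exp ⟪l • x, (z.2 : EuclideanSpace ℝ (Fin n))⟫) := by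
    intro z
    rw [ell_apply, Real.exp_add, wt, smul_eq_mul, real_inner_smul_left, real_inner_comm]
    simp only
    ring_nf
  simp only [e1]
  rw [integral_const_mul, integral_prod_mul (f := fun s => Real.exp (-(l * t) * Real.cosh s) *
        Real.cosh ((μ - 1) / 2 * s)) (g := fun ω : Metric.sphere (0 : EuclideanSpace ℝ (Fin n)) 1 =>
          Real.exp ⟪l • x, (ω : EuclideanSpace ℝ (Fin n))⟫)]
  rw [hEPD, besselK, phi, Real.mul_rpow hl0.le ht.le]
  have e2 : l ^ ((μ - 1) / 2 + q) = l ^ ((μ + 1) / 2) * l ^ (q - 1) := by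
    rw [← Real.rpow_add hl0]; ring_nf
  rw [e2]
  ring

/-! ### The differential equation -/

/-- The amplitude of the time derivative. -/
abbrev ampT (n : ℕ) (T : ℝ × (ℝ × Metric.sphere (0 : EuclideanSpace ℝ (Fin n)) 1) → ℝ) :
    ℝ × (ℝ × Metric.sphere (0 : EuclideanSpace ℝ (Fin n)) 1) → ℝ :=
  fun a => ell n a (1, 0) • T a

/-- The amplitude of the derivative in the `i`-th space direction. -/
abbrev ampX (n : ℕ) (i : Fin n)
    (T : ℝ × (ℝ × Metric.sphere (0 : EuclideanSpace ℝ (Fin n)) 1) → ℝ) :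
    ℝ × (ℝ × Metric.sphere (0 : EuclideanSpace ℝ (Fin n)) 1) → ℝ :=
  fun a => ell n a (0, EuclideanSpace.single i 1) • T a

section

variable {n : ℕ} {T : ℝ × (ℝ × Metric.sphere (0 : EuclideanSpace ℝ (Fin n)) 1) → ℝ}

theorem hasDerivAt_time (hT : Admissible (paramMeasure n) (ell n) (Set.Ioi 0 ×ˢ Set.univ) T)
    {t : ℝ} (ht : 0 < t) (x : EuclideanSpace ℝ (Fin n)) :
    HasDerivAt (fun r => laplaceInt (paramMeasure n) (ell n) T (r, x))
      (laplaceInt (paramMeasure n) (ell n) (ampT n T) (t, x)) t := by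
  have hp : (t, x) ∈ Set.Ioi (0 : ℝ) ×ˢ (Set.univ : Set (EuclideanSpace ℝ (Fin n))) :=
    ⟨ht, trivial⟩
  rw [← hT.fderiv_apply (aesm_ell n) hp]
  exact (hT.hasFDerivAt (aesm_ell n) hp).comp_hasDerivAt t
    ((hasDerivAt_id t).prodMk (hasDerivAt_const t x))

theorem fderiv_space (hT : Admissible (paramMeasure n) (ell n) (Set.Ioi 0 ×ˢ Set.univ) T)
    {t : ℝ} (ht : 0 < t) (x : EuclideanSpace ℝ (Fin n)) (i : Fin n) (c : ℝ) :
    fderiv ℝ (fun y => c * laplaceInt (paramMeasure n) (ell n) T (t, y)) x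
      (EuclideanSpace.single i 1) =
      c * laplaceInt (paramMeasure n) (ell n) (ampX n i T) (t, x) := by
  have hp : (t, x) ∈ Set.Ioi (0 : ℝ) ×ˢ (Set.univ : Set (EuclideanSpace ℝ (Fin n))) :=
    ⟨ht, trivial⟩
  rw [← hT.fderiv_apply (aesm_ell n) hp]
  have h := ((hT.hasFDerivAt (aesm_ell n) hp).comp x
    ((hasFDerivAt_const t x).prodMk (hasFDerivAt_id x))).const_mul c
  rw [show (fun y => c * laplaceInt (paramMeasure n) (ell n) T (t, y)) =
    fun y => c * (laplaceInt (paramMeasure n) (ell n) T ∘ fun y => (t, y)) y from rfl, h.fderiv]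
  simp

end

theorem integral_comb {A ι : Type} [MeasurableSpace A] [Fintype ι] {m : Measure A}
    {f2 f1 f0 : A → ℝ} {g : ι → A → ℝ} (h2 : Integrable f2 m) (h1 : Integrable f1 m)
    (h0 : Integrable f0 m) (hg : ∀ i, Integrable (g i) m) (c2 c1 c0 c : ℝ) :
    Integrable (fun a => c2 * f2 a + c1 * f1 a - c0 * f0 a - c * ∑ i, g i a) m ∧
    ∫ a, (c2 * f2 a + c1 * f1 a - c0 * f0 a - c * ∑ i, g i a) ∂m =
      c2 * ∫ a, f2 a ∂m + c1 * ∫ a, f1 a ∂m - c0 * ∫ a, f0 a ∂m - c * ∑ i, ∫ a, g i a ∂m := by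
  have hs := (integrable_finsetSum Finset.univ fun i _ => hg i).const_mul c
  have i1 : Integrable (fun a => c2 * f2 a + c1 * f1 a) m := (h2.const_mul c2).add (h1.const_mul c1)
  have i2 : Integrable (fun a => c2 * f2 a + c1 * f1 a - c0 * f0 a) m := i1.sub (h0.const_mul c0)
  refine ⟨i2.sub hs, ?_⟩
  rw [integral_sub i2 hs, integral_sub i1 (h0.const_mul c0),
    integral_add (h2.const_mul c2) (h1.const_mul c1)]
  simp only [integral_const_mul]
  rw [integral_finsetSum _ fun i _ => hg i]

/-- The equation satisfied by the exponential integral. Since `|ω| = 1`, the amplitudes combine to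
`λ² (cosh² s − 1) = λ² sinh² s`, and the `s`-integral vanishes by the Bessel equation with
`τ = λt`. -/
theorem laplaceInt_pde {n : ℕ} {μ q : ℝ} (hq : -min 1 μ < q) {t : ℝ} (ht : 0 < t)
    (x : EuclideanSpace ℝ (Fin n)) :
    t ^ 2 * laplaceInt (paramMeasure n) (ell n) (ampT n (ampT n (wt n μ q))) (t, x)
      + t * laplaceInt (paramMeasure n) (ell n) (ampT n (wt n μ q)) (t, x)
      - ((μ - 1) / 2) ^ 2 * laplaceInt (paramMeasure n) (ell n) (wt n μ q) (t, x)
      - t ^ 2 * ∑ i, laplaceInt (paramMeasure n) (ell n) (ampX n i (ampX n i (wt n μ q))) (t, x)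
      = 0 := by
  have hp : (t, x) ∈ Set.Ioi (0 : ℝ) ×ˢ (Set.univ : Set (EuclideanSpace ℝ (Fin n))) :=
    ⟨ht, trivial⟩
  have hℓ := aesm_ell n
  have hw := admissible_wt n (μ := μ) (q := q) hq
  have h0 := hw.integrable hℓ hp
  have h1 := (hw.dir hℓ (1, 0)).integrable hℓ hp
  have h2 := ((hw.dir hℓ (1, 0)).dir hℓ (1, 0)).integrable hℓ hp
  have hx := fun i => ((hw.dir hℓ (0, EuclideanSpace.single i 1)).dir hℓ
    (0, EuclideanSpace.single i 1)).integrable hℓ hp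
  obtain ⟨hall, key⟩ := integral_comb h2 h1 h0 hx (t ^ 2) t (((μ - 1) / 2) ^ 2) (t ^ 2)
  refine key.symm.trans ?_
  unfold paramMeasure at hall ⊢
  rw [integral_prod _ hall]
  refine setIntegral_eq_zero_of_forall_eq_zero fun l hl => ?_
  have hl0 : 0 < l := hl.1
  have e1 : ∀ z : ℝ × Metric.sphere (0 : EuclideanSpace ℝ (Fin n)) 1,
      t ^ 2 * (Real.exp (ell n (l, z) (t, x)) • ampT n (ampT n (wt n μ q)) (l, z))
      + t * (Real.exp (ell n (l, z) (t, x)) • ampT n (wt n μ q) (l, z))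
      - ((μ - 1) / 2) ^ 2 * (Real.exp (ell n (l, z) (t, x)) • wt n μ q (l, z))
      - t ^ 2 * ∑ i, Real.exp (ell n (l, z) (t, x)) • ampX n i (ampX n i (wt n μ q)) (l, z) =
      (Real.exp (-((l * t) * Real.cosh z.1)) * Real.cosh ((μ - 1) / 2 * z.1) *
        ((l * t) ^ 2 * Real.sinh z.1 ^ 2 - (l * t) * Real.cosh z.1 - ((μ - 1) / 2) ^ 2)) *
      (l ^ ((μ - 1) / 2 + q) * Real.exp (l * ⟪(z.2 : EuclideanSpace ℝ (Fin n)), x⟫)) := by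
    intro z
    have hω : ∑ i, (z.2 : EuclideanSpace ℝ (Fin n)) i ^ 2 = 1 := by
      rw [← EuclideanSpace.real_norm_sq_eq]; simp
    have hsum : ∑ i, Real.exp (ell n (l, z) (t, x)) • ampX n i (ampX n i (wt n μ q)) (l, z) =
        Real.exp (ell n (l, z) (t, x)) * wt n μ q (l, z) * l ^ 2 := by
      refine Eq.trans ?_ ((congrArg (fun r => Real.exp (ell n (l, z) (t, x)) * wt n μ q (l, z) *
        l ^ 2 * r) hω).trans (mul_one _))
      rw [Finset.mul_sum]
      refine Finset.sum_congr rfl fun i _ => ?_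
      simp only [ampX, ell_apply, smul_eq_mul, EuclideanSpace.inner_single_right]
      simp
      ring
    have hT : ell n (l, z) (1, 0) = -(l * Real.cosh z.1) := by
      simp [ell_apply]
    rw [hsum]
    simp only [ampT, hT, smul_eq_mul]
    rw [ell_apply, Real.exp_add, wt, Real.sinh_sq]
    simp only
    rw [show -(l * Real.cosh z.1) * t = -(l * t * Real.cosh z.1) by ring]
    ring
  refine (integral_congr_ae (.of_forall e1)).trans ?_
  rw [integral_prod_mul (f := fun s => Real.exp (-((l * t) * Real.cosh s)) *
      Real.cosh ((μ - 1) / 2 * s) *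
        ((l * t) ^ 2 * Real.sinh s ^ 2 - (l * t) * Real.cosh s - ((μ - 1) / 2) ^ 2))
    (g := fun ω : Metric.sphere (0 : EuclideanSpace ℝ (Fin n)) 1 =>
      l ^ ((μ - 1) / 2 + q) * Real.exp (l * ⟪(ω : EuclideanSpace ℝ (Fin n)), x⟫)),
    integral_bessel_eq_zero _ (mul_pos hl0 ht), zero_mul]

/-- Conjugation by `t^α`, `α = (μ+1)/2`, turns `∂_t² − ∂_t(μ·/t)` into
`∂_t² + t⁻¹ ∂_t − ν² t⁻²`, where `ν = (μ−1)/2`. -/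
theorem deriv_conj {μ : ℝ} {f j j1 j2 : ℝ → ℝ}
    (hf : ∀ r > 0, f r = r ^ ((μ + 1) / 2) * j r) (hj : ∀ r > 0, HasDerivAt j (j1 r) r)
    (hj1 : ∀ r > 0, HasDerivAt j1 (j2 r) r) {t : ℝ} (ht : 0 < t) :
    t ^ 2 * (deriv (fun s => deriv f s) t - deriv (fun s => μ * f s / s) t) =
      t ^ ((μ + 1) / 2) * (t ^ 2 * j2 t + t * j1 t - ((μ - 1) / 2) ^ 2 * j t) := by
  set α := (μ + 1) / 2 with hα
  have hpow : ∀ r > (0 : ℝ), HasDerivAt (fun r : ℝ => r ^ α) (α * r ^ (α - 1)) r :=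
    fun r hr => Real.hasDerivAt_rpow_const (.inl hr.ne')
  have hd : ∀ r > 0, HasDerivAt f (α * r ^ (α - 1) * j r + r ^ α * j1 r) r := by
    intro r hr
    refine ((hpow r hr).mul (hj r hr)).congr_of_eventuallyEq ?_
    filter_upwards [lt_mem_nhds hr] with s hs using hf s hs
  have hdd : HasDerivAt (fun s => deriv f s)
      (α * ((α - 1) * t ^ (α - 1 - 1)) * j t + α * t ^ (α - 1) * j1 t
        + (α * t ^ (α - 1) * j1 t + t ^ α * j2 t)) t := by
    have hpow' : HasDerivAt (fun r : ℝ => α * r ^ (α - 1)) (α * ((α - 1) * t ^ (α - 1 - 1))) t :=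
      (Real.hasDerivAt_rpow_const (.inl ht.ne')).const_mul α
    refine ((hpow'.mul (hj t ht)).add ((hpow t ht).mul (hj1 t ht))).congr_of_eventuallyEq ?_
    filter_upwards [lt_mem_nhds ht] with s hs using (hd s hs).deriv
  have hq := ((hd t ht).const_mul μ).div (hasDerivAt_id t) ht.ne'
  rw [hdd.deriv, show (fun s => μ * f s / s) = (fun s => μ * f s) / id from rfl, hq.deriv, hf t ht]
  have p1 : t ^ (α - 1) = t ^ α / t := by rw [Real.rpow_sub_one ht.ne']
  have p2 : t ^ (α - 1 - 1) = t ^ α / t / t := by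
    rw [Real.rpow_sub_one ht.ne', Real.rpow_sub_one ht.ne']
  rw [p1, p2]
  simp only [id]
  -- With `μ = 2α − 1` one has `ν = α − 1`, and both sides become polynomial in `α`.
  have hμ : μ = 2 * α - 1 := by rw [hα]; ring
  rw [hμ]
  field_simp
  ring

/-- for `n ≥ 2`, `μ > 0`, `q > −min(1,μ)`, `b_q` is smooth on `(0,∞)×ℝⁿ`
and satisfies `∂_t² b_q − Δ_x b_q − ∂_t(μ b_q/t) = 0` there. -/
theorem bq_solves_adjoint_equation (n : ℕ) (hn : 2 ≤ n) (μ q : ℝ) (hμ : 0 < μ)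
    (hq : -min 1 μ < q) :
    ContDiffOn ℝ (⊤ : ℕ∞)
      (fun p : ℝ × EuclideanSpace ℝ (Fin n) => bq n μ q p.1 p.2)
      (Set.Ioi 0 ×ˢ Set.univ) ∧
    ∀ t ∈ Set.Ioi (0 : ℝ), ∀ x : EuclideanSpace ℝ (Fin n),
      deriv (fun s => deriv (fun r => bq n μ q r x) s) t
        - lap n (bq n μ q t) x
        - deriv (fun s => μ * bq n μ q s x / s) t = 0 := by
  have hU : IsOpen (Set.Ioi (0 : ℝ) ×ˢ (Set.univ : Set (EuclideanSpace ℝ (Fin n)))) :=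
    isOpen_Ioi.prod isOpen_univ
  have hw := admissible_wt n hq
  have hℓ := aesm_ell n
  constructor
  · have h1 : ContDiffOn ℝ (⊤ : ℕ∞) (fun p : ℝ × EuclideanSpace ℝ (Fin n) =>
        p.1 ^ ((μ + 1) / 2)) (Set.Ioi 0 ×ˢ Set.univ) :=
      contDiff_fst.contDiffOn.rpow_const_of_ne fun p hp => (ne_of_gt hp.1)
    have h2 : ContDiffOn ℝ (⊤ : ℕ∞) (laplaceInt (paramMeasure n) (ell n) (wt n μ q))
        (Set.Ioi 0 ×ˢ Set.univ) :=
      contDiffOn_infty.2 fun k => contDiffOn_laplaceInt_nat hℓ hU k hw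
    exact (h1.mul h2).congr fun p hp => bq_eq_laplaceInt hq hp.1 p.2
  · intro t ht x
    replace ht : 0 < t := ht
    have hlap : lap n (bq n μ q t) x = t ^ ((μ + 1) / 2) *
        ∑ i, laplaceInt (paramMeasure n) (ell n) (ampX n i (ampX n i (wt n μ q))) (t, x) := by
      have hb : bq n μ q t = fun y => t ^ ((μ + 1) / 2) *
          laplaceInt (paramMeasure n) (ell n) (wt n μ q) (t, y) :=
        funext fun y => bq_eq_laplaceInt hq ht y
      rw [lap, Finset.mul_sum, hb]
      refine Finset.sum_congr rfl fun i _ => ?_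
      simp only [fderiv_space hw ht]
      exact fderiv_space (hw.dir hℓ _) ht x i _
    have hconj := deriv_conj (μ := μ) (f := fun r => bq n μ q r x)
      (fun r hr => bq_eq_laplaceInt hq hr x) (fun r hr => hasDerivAt_time hw hr x)
      (fun r hr => hasDerivAt_time (hw.dir hℓ (1, 0)) hr x) ht
    have hpde := laplaceInt_pde (n := n) (μ := μ) hq ht x
    -- Both ingredients are stated with denominators cleared by `t ^ 2`.
    refine (mul_eq_zero.1 (?_ : t ^ 2 * _ = 0)).resolve_left (pow_ne_zero 2 ht.ne')
    rw [hlap]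
    linear_combination hconj + t ^ ((μ + 1) / 2) * hpde
end
end
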